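/- arXiv:2412.06659 — 2 statements merged into one kernel-verified Lean document; each statement's English description precedes it below -/
import Mathlib

section
/- Let R be a Noetherian local ring. If there exists a nonzero finitely generated R-module M with qid_R M < ∞ and dim R = dim M + grade(M,R), then R is Cohen–Macaulay. -/
/-!
A Noetherian local ring has depth at most its dimension, so it suffices to prove
`dim M + grade M ≤ depth R` when the quasi-injective dimension of `M` is finite.

Let `I` be a bounded complex of injectives with `H_i(I) ≅ M^{b_i}`, and let `t` be the least degree
with `H_t(I) ≠ 0`, so that `H_t(I)` has the support of `M`. The argument follows the degrees `i` in
which `H_i(Hom(N, I))` is nonzero as the finitely generated module `N` varies. Dividing `N` by a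
regular element lowers the degrees by one (`exists_quotient_by_sequence`), and passing from
`R/p` to `R/q` for a strictly larger prime `q` lowers them by at least one
(`exists_lt_mem_support_hy`, Bass's lemma).

If `Ext^i(M, R) = 0` for `i < n`, the annihilator of `M` contains a weakly `R`-regular sequence of
length `n` (`exists_isWeaklyRegular_of_extMod`, Rees). Dividing `R` by it and then climbing a chain
of primes of length `d` in the support of `M` produces homology for the residue field `k` in a degree
at most `t - n - d`.

In the other direction, let `rs'` be a maximal regular sequence, of length `s`. The homology for
`B = R/(rs')` vanishes below degree `t - s`, and `k` embeds into `B`. In the least degree in which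
the homology is nonzero for some finitely generated module, it is nonzero for `k`, and the long exact
sequence makes it a quotient of the homology for `B`. This degree is therefore at least `t - s`,
whence `n + d ≤ s` (`length_add_length_le`).
-/

open CategoryTheory CategoryTheory.Limits Opposite

noncomputable section

variable (R : Type) [CommRing R]

/-- The `i`-th Ext module of two `R`-modules. -/
def extMod (M N : Type) [AddCommGroup M] [Module R M] [AddCommGroup N] [Module R N]
    (i : ℕ) : ModuleCat R :=
  ((Ext R (ModuleCat.{0} R) i).obj (op (ModuleCat.of R M))).obj (ModuleCat.of R N)

/-- The `i`-th Tor module of two `R`-modules. -/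
def torMod (M N : Type) [AddCommGroup M] [Module R M] [AddCommGroup N] [Module R N]
    (i : ℕ) : ModuleCat R :=
  ((Tor (ModuleCat.{0} R) i).obj (ModuleCat.of R M)).obj (ModuleCat.of R N)

/-- `grade(M,N) = inf { i | Ext^i(M,N) ≠ 0 }`, as an extended natural number. -/
def extGrade (M N : Type) [AddCommGroup M] [Module R M] [AddCommGroup N] [Module R N] : ℕ∞ :=
  sInf {c : ℕ∞ | ∃ i : ℕ, c = i ∧ Nontrivial (extMod R M N i)}

/-- `P_R(M,N) = sup { i | Ext^i(M,N) ≠ 0 }`, as an extended natural number. -/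
def extSup (M N : Type) [AddCommGroup M] [Module R M] [AddCommGroup N] [Module R N] : ℕ∞ :=
  sSup {c : ℕ∞ | ∃ i : ℕ, c = i ∧ Nontrivial (extMod R M N i)}

/-- `depth(I, N)`: the supremum of lengths of `N`-regular sequences contained in `I`. -/
def idealDepth (I : Ideal R) (N : Type) [AddCommGroup N] [Module R N] : ℕ∞ :=
  ⨆ rs : {l : List R // (∀ r ∈ l, r ∈ I) ∧ RingTheory.Sequence.IsRegular N l},
    (rs.1.length : ℕ∞)

/-- The depth of a module over a local ring. -/
def moduleDepth [IsLocalRing R] (N : Type) [AddCommGroup N] [Module R N] : ℕ∞ :=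
  idealDepth R (IsLocalRing.maximalIdeal R) N

/-- The Krull dimension of a module: the sup of lengths of chains of primes in its support. -/
def moduleDim (M : Type) [AddCommGroup M] [Module R M] : ℕ∞ :=
  ⨆ c : LTSeries (Module.support R M), (c.length : ℕ∞)

/-- A quasi-projective resolution: a bounded-below complex of projectives whose homologies
are finite direct sums of copies of `M`, not all zero. -/
def IsQuasiProjRes (P : ChainComplex (ModuleCat.{0} R) ℤ)
    (M : Type) [AddCommGroup M] [Module R M] : Prop :=
  (∀ i, Projective (P.X i)) ∧
  (∃ n : ℤ, ∀ i < n, IsZero (P.X i)) ∧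
  (∃ a : ℤ → ℕ, (∃ i, 0 < a i) ∧
    ∀ i, Nonempty ((P.homology i) ≅ ModuleCat.of R (Fin (a i) → M)))

/-- Quasi-projective dimension: `inf { sup P - hsup P }` over bounded quasi-projective
resolutions `P` of `M`.  The condition `sup P - hsup P ≤ n` is encoded as the existence of
a degree `h` with nonzero homology such that `P` vanishes in degrees `> h + n`. -/
def qpd (M : Type) [AddCommGroup M] [Module R M] : ℕ∞ :=
  sInf {c : ℕ∞ | ∃ n : ℕ, c = n ∧ ∃ P : ChainComplex (ModuleCat.{0} R) ℤ,
    IsQuasiProjRes R P M ∧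
    ∃ h : ℤ, ¬ IsZero (P.homology h) ∧ ∀ i, h + n < i → IsZero (P.X i)}

/-- A quasi-injective resolution: a bounded-above complex of injectives whose homologies
are finite direct sums of copies of `M`, not all zero. -/
def IsQuasiInjRes (I : ChainComplex (ModuleCat.{0} R) ℤ)
    (M : Type) [AddCommGroup M] [Module R M] : Prop :=
  (∀ i, Injective (I.X i)) ∧
  (∃ n : ℤ, ∀ i > n, IsZero (I.X i)) ∧
  (∃ b : ℤ → ℕ, (∃ i, 0 < b i) ∧
    ∀ i, Nonempty ((I.homology i) ≅ ModuleCat.of R (Fin (b i) → M)))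

/-- Quasi-injective dimension: `inf { hinf I - inf I }` over bounded quasi-injective
resolutions `I` of `M`. -/
def qid (M : Type) [AddCommGroup M] [Module R M] : ℕ∞ :=
  sInf {c : ℕ∞ | ∃ n : ℕ, c = n ∧ ∃ I : ChainComplex (ModuleCat.{0} R) ℤ,
    IsQuasiInjRes R I M ∧
    ∃ h : ℤ, ¬ IsZero (I.homology h) ∧ ∀ i, i < h - n → IsZero (I.X i)}

/-- Projective dimension, via finite projective resolutions. -/
def projDim (M : Type) [AddCommGroup M] [Module R M] : ℕ∞ :=
  sInf {c : ℕ∞ | ∃ n : ℕ, c = n ∧ ∃ P : ChainComplex (ModuleCat.{0} R) ℤ,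
    (∀ i, Projective (P.X i)) ∧ (∀ i : ℤ, (i < 0 ∨ (n : ℤ) < i) → IsZero (P.X i)) ∧
    Nonempty ((P.homology 0) ≅ ModuleCat.of R M) ∧ ∀ i ≠ 0, IsZero (P.homology i)}

/-- Injective dimension, via finite injective resolutions (in degrees `-n, …, 0`). -/
def injDim (M : Type) [AddCommGroup M] [Module R M] : ℕ∞ :=
  sInf {c : ℕ∞ | ∃ n : ℕ, c = n ∧ ∃ I : ChainComplex (ModuleCat.{0} R) ℤ,
    (∀ i, Injective (I.X i)) ∧ (∀ i : ℤ, (0 < i ∨ i < -(n : ℤ)) → IsZero (I.X i)) ∧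
    Nonempty ((I.homology 0) ≅ ModuleCat.of R M) ∧ ∀ i ≠ 0, IsZero (I.homology i)}

/-- The depth of the localization `N_p` over the local ring `R_p`. -/
def localDepth (p : PrimeSpectrum R) (N : Type) [AddCommGroup N] [Module R N] : ℕ∞ :=
  idealDepth (Localization.AtPrime p.asIdeal)
    (IsLocalRing.maximalIdeal (Localization.AtPrime p.asIdeal))
    (LocalizedModule p.asIdeal.primeCompl N)

end

namespace QidCM

/-! ### The complex `Hom(N, I)` and its homology -/

section HomComplex

variable {R : Type} [CommRing R] (I : ChainComplex (ModuleCat.{0} R) ℤ)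

/-- The complex `Hom_R(N, I)`, indexed homologically like `I`. -/
noncomputable def homCx (N : ModuleCat.{0} R) : ChainComplex (ModuleCat.{0} R) ℤ :=
  (((linearCoyoneda R (ModuleCat.{0} R)).obj (op N)).mapHomologicalComplex _).obj I

/-- The map `Hom_R(N', I) ⟶ Hom_R(N, I)` induced by `f : N ⟶ N'`. -/
noncomputable def homCxMap {N N' : ModuleCat.{0} R} (f : N ⟶ N') : homCx I N' ⟶ homCx I N :=
  (NatTrans.mapHomologicalComplex ((linearCoyoneda R (ModuleCat.{0} R)).map f.op) _).app I

lemma homCxMap_comp {N N' N'' : ModuleCat.{0} R} (f : N ⟶ N') (g : N' ⟶ N'') :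
    homCxMap I (f ≫ g) = homCxMap I g ≫ homCxMap I f := by
  ext i x
  simp [homCxMap, homCx]

lemma homCxMap_id (N : ModuleCat.{0} R) : homCxMap I (𝟙 N) = 𝟙 _ := by
  ext i x
  simp [homCxMap, homCx]

lemma homCxMap_zero (N N' : ModuleCat.{0} R) : homCxMap I (0 : N ⟶ N') = 0 := by
  ext i (x : N' ⟶ I.X i)
  exact zero_comp (f := x)

lemma homCxMap_smul (N : ModuleCat.{0} R) (r : R) : homCxMap I (r • 𝟙 N) = r • 𝟙 _ := by
  ext i (x : N ⟶ I.X i)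
  change (r • 𝟙 N) ≫ x = r • x
  simp

/-- The short complex `Hom_R(N₃, I) ⟶ Hom_R(N₂, I) ⟶ Hom_R(N₁, I)`. -/
noncomputable def homCxShort (S : ShortComplex (ModuleCat.{0} R)) :
    ShortComplex (ChainComplex (ModuleCat.{0} R) ℤ) :=
  ShortComplex.mk (homCxMap I S.g) (homCxMap I S.f)
    (by rw [← homCxMap_comp, S.zero, homCxMap_zero])

lemma homCxShort_shortExact (hI : ∀ i, Injective (I.X i)) {S : ShortComplex (ModuleCat.{0} R)}
    (hS : S.ShortExact) : (homCxShort I S).ShortExact := by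
  apply HomologicalComplex.shortExact_of_degreewise_shortExact
  intro i
  have := hI i
  have := hS.mono_f
  have := hS.epi_g
  apply ModuleCat.shortComplex_shortExact
  · intro (φ : S.X₂ ⟶ I.X i)
    constructor
    · intro (h : S.f ≫ φ = 0)
      exact ⟨hS.exact.desc φ h, hS.exact.g_desc φ h⟩
    · rintro ⟨(ψ : S.X₃ ⟶ I.X i), rfl⟩
      change S.f ≫ (S.g ≫ ψ) = 0
      simp
  · intro (a : S.X₃ ⟶ I.X i) (b : S.X₃ ⟶ I.X i) (h : S.g ≫ a = S.g ≫ b)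
    exact (cancel_epi S.g).mp h
  · intro (φ : S.X₁ ⟶ I.X i)
    exact ⟨Injective.factorThru φ S.f, Injective.comp_factorThru φ S.f⟩

/-- The complex `Hom_R(R, I)` is `I`. -/
noncomputable def homCxSelfIso : homCx I (ModuleCat.of R R) ≅ I :=
  HomologicalComplex.Hom.isoOfComponents
    (fun i => ((ModuleCat.homLinearEquiv (S := R)).trans
      (LinearMap.ringLmapEquivSelf R R (I.X i))).toModuleIso) (by
    intro i j _
    ext (φ : ModuleCat.of R R ⟶ I.X i)
    rfl)

end HomComplex

section Homology

variable {R : Type} [CommRing R] (I : ChainComplex (ModuleCat.{0} R) ℤ)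

/-- `H_i(Hom_R(N, I))`; it is `Ext_R^{-i}(N, I)` when `I` is a bounded complex of injectives. -/
noncomputable abbrev hy (i : ℤ) (N : Type) [AddCommGroup N] [Module R N] : ModuleCat.{0} R :=
  (homCx I (ModuleCat.of R N)).homology i

/-- The map `H_i(Hom_R(N', I)) → H_i(Hom_R(N, I))` induced by `f : N → N'`. -/
noncomputable def hyMap (i : ℤ) {N N' : Type} [AddCommGroup N] [Module R N] [AddCommGroup N']
    [Module R N'] (f : N →ₗ[R] N') : hy I i N' →ₗ[R] hy I i N :=
  (HomologicalComplex.homologyMap (homCxMap I (ModuleCat.ofHom f)) i).hom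

variable {N N' N'' : Type} [AddCommGroup N] [Module R N] [AddCommGroup N'] [Module R N']
  [AddCommGroup N''] [Module R N'']

lemma hyMap_comp (i : ℤ) (f : N →ₗ[R] N') (g : N' →ₗ[R] N'') :
    hyMap I i (g ∘ₗ f) = hyMap I i f ∘ₗ hyMap I i g := by
  simp [hyMap, ModuleCat.ofHom_comp, homCxMap_comp, HomologicalComplex.homologyMap_comp]

lemma hyMap_id (i : ℤ) : hyMap I i (LinearMap.id : N →ₗ[R] N) = LinearMap.id := by
  simp [hyMap, homCxMap_id]

lemma hyMap_smul (i : ℤ) (r : R) :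
    hyMap I i (r • LinearMap.id : N →ₗ[R] N) = r • LinearMap.id := by
  have : ModuleCat.ofHom (r • LinearMap.id : N →ₗ[R] N) = r • 𝟙 _ := rfl
  rw [hyMap, this, homCxMap_smul]
  have h : HomologicalComplex.homologyMap (r • 𝟙 (homCx I (ModuleCat.of R N))) i =
      r • HomologicalComplex.homologyMap (𝟙 (homCx I (ModuleCat.of R N))) i :=
    ShortComplex.homologyMap_smul
      ((HomologicalComplex.shortComplexFunctor _ _ i).map (𝟙 (homCx I (ModuleCat.of R N)))) r
  rw [h, HomologicalComplex.homologyMap_id]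
  rfl

/-- Isomorphic modules give isomorphic homology. -/
noncomputable def hyEquiv (i : ℤ) (e : N ≃ₗ[R] N') : hy I i N' ≃ₗ[R] hy I i N :=
  LinearEquiv.ofLinearMap (hyMap I i e.toLinearMap) (hyMap I i e.symm.toLinearMap)
    (by rw [← hyMap_comp]; simp [hyMap_id]) (by rw [← hyMap_comp]; simp [hyMap_id])

/-- The long exact sequence attached to `0 → N → N' → N'' → 0`. -/
lemma hy_exact (hI : ∀ i, Injective (I.X i)) {f : N →ₗ[R] N'} {g : N' →ₗ[R] N''}
    (hf : Function.Injective f) (hg : Function.Surjective g) (hfg : Function.Exact f g)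
    (i j : ℤ) (hij : j + 1 = i) :
    Function.Exact (hyMap I i g) (hyMap I i f) ∧
    ∃ δ : hy I i N →ₗ[R] hy I j N'',
      Function.Exact (hyMap I i f) δ ∧ Function.Exact δ (hyMap I j g) := by
  let S : ShortComplex (ModuleCat.{0} R) :=
    ShortComplex.mk (ModuleCat.ofHom f) (ModuleCat.ofHom g) (by
      ext x; exact hfg.apply_apply_eq_zero x)
  have hS : S.ShortExact := ModuleCat.shortComplex_shortExact S hfg hf hg
  have h := homCxShort_shortExact I hI hS
  refine ⟨(ShortComplex.ShortExact.moduleCat_exact_iff_function_exact _).mp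
    (h.homology_exact₂ i), (h.δ i j hij).hom, ?_, ?_⟩
  · exact (ShortComplex.ShortExact.moduleCat_exact_iff_function_exact _).mp
      (h.homology_exact₃ i j hij)
  · exact (ShortComplex.ShortExact.moduleCat_exact_iff_function_exact _).mp
      (h.homology_exact₁ i j hij)

lemma subsingleton_hy_of_isZero_X (i : ℤ) (h : IsZero (I.X i)) : Subsingleton (hy I i N) := by
  rw [← ModuleCat.isZero_iff_subsingleton]
  have hX : IsZero ((homCx I (ModuleCat.of R N)).X i) := by
    rw [ModuleCat.isZero_iff_subsingleton]
    exact ⟨fun (a b : ModuleCat.of R N ⟶ I.X i) => h.eq_of_tgt a b⟩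
  exact ((homCx I (ModuleCat.of R N)).exactAt_iff_isZero_homology i).mp
    (ShortComplex.exact_of_isZero_X₂ _ hX)

lemma subsingleton_hy_of_subsingleton [Subsingleton N] (i : ℤ) : Subsingleton (hy I i N) := by
  have h : (hyMap I i (LinearMap.id : N →ₗ[R] N)) = hyMap I i ((0 : R) • LinearMap.id) :=
    congrArg _ (by ext x; exact Subsingleton.elim _ _)
  rw [hyMap_id, hyMap_smul] at h
  refine ⟨fun a b => ?_⟩
  have ha := LinearMap.congr_fun h a
  have hb := LinearMap.congr_fun h b
  simp at ha hb
  rw [ha, hb]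

/-- `H_i(Hom_R(R, I))` is `H_i(I)`. -/
noncomputable def hySelf (i : ℤ) : hy I i R ≃ₗ[R] I.homology i :=
  ((HomologicalComplex.homologyFunctor _ _ i).mapIso (homCxSelfIso I)).toLinearEquiv

end Homology

/-! ### Vanishing of Ext and regular sequences -/

section Ext

variable {R : Type} [CommRing R]

/-- The map `Hom_R(P, Y) ⟶ Hom_R(P, Y')` induced by `g : Y ⟶ Y'`. -/
noncomputable def projCxMap (P : ChainComplex (ModuleCat.{0} R) ℕ) {Y Y' : ModuleCat.{0} R}
    (g : Y ⟶ Y') : P.linearYonedaObj R Y ⟶ P.linearYonedaObj R Y' where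
  f i := ModuleCat.ofHom (Linear.rightComp R (P.X i) g)
  comm' i j _ := by
    ext (φ : P.X i ⟶ Y)
    exact (Category.assoc (P.d j i) φ g).symm

/-- The short complex of complexes obtained by applying `Hom_R(P, -)` to a short complex. -/
noncomputable def projCxShort (P : ChainComplex (ModuleCat.{0} R) ℕ)
    (S : ShortComplex (ModuleCat.{0} R)) : ShortComplex (CochainComplex (ModuleCat.{0} R) ℕ) :=
  ShortComplex.mk (projCxMap P S.f) (projCxMap P S.g) (by
    ext i (φ : P.X i ⟶ S.X₁)
    change (φ ≫ S.f) ≫ S.g = 0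
    simp)

lemma projCxShort_shortExact (P : ChainComplex (ModuleCat.{0} R) ℕ) (hP : ∀ i, Projective (P.X i))
    {S : ShortComplex (ModuleCat.{0} R)} (hS : S.ShortExact) : (projCxShort P S).ShortExact := by
  apply HomologicalComplex.shortExact_of_degreewise_shortExact
  intro i
  have := hP i
  have := hS.mono_f
  have := hS.epi_g
  apply ModuleCat.shortComplex_shortExact
  · intro (φ : P.X i ⟶ S.X₂)
    constructor
    · intro (h : φ ≫ S.g = 0)
      exact ⟨hS.exact.lift φ h, hS.exact.lift_f φ h⟩
    · rintro ⟨(ψ : P.X i ⟶ S.X₁), rfl⟩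
      change (ψ ≫ S.f) ≫ S.g = 0
      simp
  · intro (a : P.X i ⟶ S.X₁) (b : P.X i ⟶ S.X₁) (h : a ≫ S.f = b ≫ S.f)
    exact (cancel_mono S.f).mp h
  · intro (φ : P.X i ⟶ S.X₃)
    exact ⟨Projective.factorThru φ S.g, Projective.factorThru_comp φ S.g⟩

variable {M A : Type} [AddCommGroup M] [Module R M] [AddCommGroup A] [Module R A]

lemma subsingleton_extMod_iff (P : ProjectiveResolution (ModuleCat.of R M)) (i : ℕ) :
    Subsingleton (extMod R M A i) ↔
      (P.complex.linearYonedaObj R (ModuleCat.of R A)).ExactAt i := by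
  rw [← ModuleCat.isZero_iff_subsingleton, HomologicalComplex.exactAt_iff_isZero_homology]
  exact (P.isoExt i (ModuleCat.of R A)).isZero_iff

/-- If `x` is `A`-regular, the vanishing of `Ext^i(M, A)` and `Ext^{i+1}(M, A)` forces that of
`Ext^i(M, A/xA)`. -/
lemma subsingleton_extMod_quotSMulTop {x : R} (hx : IsSMulRegular A x) (i : ℕ)
    (h₀ : Subsingleton (extMod R M A i)) (h₁ : Subsingleton (extMod R M A (i + 1))) :
    Subsingleton (extMod R M (QuotSMulTop x A) i) := by
  let P := ProjectiveResolution.of (ModuleCat.of R M)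
  rw [subsingleton_extMod_iff P, HomologicalComplex.exactAt_iff_isZero_homology] at h₀ h₁ ⊢
  have hS : ((ModuleCat.of R A).smulShortComplex x).ShortExact :=
    IsSMulRegular.smulShortComplex_shortExact (M := ModuleCat.of R A) hx
  have h := projCxShort_shortExact P.complex P.projective hS
  exact (h.homology_exact₃ i (i + 1) (by simp)).isZero_X₂ (h₀.eq_of_src _ _) (h₁.eq_of_tgt _ _)

/-- `Ext^0(M, A) = 0` forces `Hom(M, A) = 0`. -/
lemma subsingleton_hom_of_extMod_zero (h₀ : Subsingleton (extMod R M A 0)) :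
    Subsingleton (M →ₗ[R] A) := by
  let P := ProjectiveResolution.of (ModuleCat.of R M)
  rw [subsingleton_extMod_iff P, HomologicalComplex.exactAt_iff' _ 0 0 1 (by simp) (by simp),
    ShortComplex.ShortExact.moduleCat_exact_iff_function_exact] at h₀
  refine subsingleton_of_forall_eq 0 fun f => ?_
  let g : ((ChainComplex.single₀ (ModuleCat.{0} R)).obj (ModuleCat.of R M)).X 0 ⟶
    ModuleCat.of R A := ModuleCat.ofHom f
  let φ : P.complex.X 0 ⟶ ModuleCat.of R A := P.π.f 0 ≫ g
  have hφ : P.complex.d 1 0 ≫ φ = 0 :=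
    (P.complex_d_comp_π_f_zero_assoc g).trans zero_comp
  obtain ⟨(ψ : P.complex.X 0 ⟶ ModuleCat.of R A), hψ⟩ := (h₀ φ).mp hφ
  have hd : P.complex.d 0 0 ≫ ψ = φ := hψ
  rw [P.complex.shape 0 0 (by simp), zero_comp] at hd
  have : ModuleCat.ofHom f = 0 :=
    (cancel_epi (P.π.f 0)).mp (hd.symm.trans comp_zero.symm)
  ext m
  exact LinearMap.congr_fun (congrArg ModuleCat.Hom.hom this) m

/-- If `Ext^i(M, A) = 0` for all `i < n`, then the annihilator of `M` contains a weakly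
`A`-regular sequence of length `n`. -/
lemma exists_isWeaklyRegular_of_extMod [IsNoetherianRing R] [Module.Finite R M] (n : ℕ) :
    ∀ (A : Type) [AddCommGroup A] [Module R A] [Module.Finite R A],
      (∀ i < n, Subsingleton (extMod R M A i)) →
      ∃ rs : List R, rs.length = n ∧ (∀ r ∈ rs, r ∈ Module.annihilator R M) ∧
        RingTheory.Sequence.IsWeaklyRegular A rs := by
  induction n with
  | zero => exact fun A _ _ _ _ => ⟨[], rfl, by simp, .nil R A⟩
  | succ n ih =>
    intro A _ _ _ h
    obtain ⟨x, hxM, hx⟩ := IsSMulRegular.subsingleton_linearMap_iff.mp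
      (subsingleton_hom_of_extMod_zero (h 0 n.succ_pos))
    obtain ⟨rs, hl, hrs, hreg⟩ := ih (QuotSMulTop x A) fun i hi =>
      subsingleton_extMod_quotSMulTop hx i (h i (by omega)) (h (i + 1) (by omega))
    exact ⟨x :: rs, by simp [hl], by simpa using ⟨hxM, hrs⟩, hreg.cons hx⟩

end Ext

/-! ### Supports of the homology and Bass's lemma -/

section ExactHelpers

variable {R : Type} [CommRing R] {X Y Z : Type} [AddCommGroup X] [Module R X] [AddCommGroup Y]
  [Module R Y] [AddCommGroup Z] [Module R Z] {f : X →ₗ[R] Y} {g : Y →ₗ[R] Z}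

lemma subsingleton_of_exact (h : Function.Exact f g) [Subsingleton X] [Subsingleton Z] :
    Subsingleton Y := by
  refine subsingleton_of_forall_eq 0 fun y => ?_
  obtain ⟨x, rfl⟩ := (h y).mp (Subsingleton.elim _ _)
  rw [Subsingleton.elim x 0, map_zero]

lemma finite_of_exact [IsNoetherianRing R] (h : Function.Exact f g) [Module.Finite R X]
    [Module.Finite R Z] : Module.Finite R Y :=
  have := isNoetherian_of_range_eq_ker f g h.linearMap_ker_eq.symm
  inferInstance

lemma mem_support_of_exact (h : Function.Exact f g) {p : PrimeSpectrum R}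
    (hp : p ∈ Module.support R Y) : p ∈ Module.support R X ∨ p ∈ Module.support R Z := by
  have hk : Function.Exact (LinearMap.ker g).subtype g.rangeRestrict := by
    rw [LinearMap.exact_iff, LinearMap.ker_rangeRestrict, Submodule.range_subtype]
  rw [Module.support_of_exact hk (Submodule.injective_subtype _) g.surjective_rangeRestrict] at hp
  refine hp.imp (fun hp => ?_) fun hp =>
    Module.support_subset_of_injective (LinearMap.range g).subtype
      (Submodule.injective_subtype _) hp
  rw [h.linearMap_ker_eq] at hp
  exact Module.support_subset_of_surjective f.rangeRestrict f.surjective_rangeRestrict hp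

end ExactHelpers

section Support

variable {R : Type} [CommRing R] {I : ChainComplex (ModuleCat.{0} R) ℤ}

/-- The annihilator of `N` kills `H_i(Hom_R(N, I))`. -/
lemma annihilator_le_hy (i : ℤ) (N : Type) [AddCommGroup N] [Module R N] :
    Module.annihilator R N ≤ Module.annihilator R (hy I i N) := by
  intro r hr
  have h0 : (r • LinearMap.id : N →ₗ[R] N) = (0 : R) • LinearMap.id := by
    ext x
    simpa using Module.mem_annihilator.mp hr x
  have h := congrArg (hyMap I i) h0
  rw [hyMap_smul, hyMap_smul] at h
  refine Module.mem_annihilator.mpr fun x => ?_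
  have hx := LinearMap.congr_fun h x
  rw [zero_smul] at hx
  exact hx

lemma le_of_mem_support_hy {i : ℤ} {p q : PrimeSpectrum R}
    (h : p ∈ Module.support R (hy I i (R ⧸ q.1))) : q ≤ p := by
  have := (annihilator_le_hy i _).trans (Module.annihilator_le_of_mem_support h)
  rwa [Ideal.annihilator_quotient] at this

section Regular

open scoped Pointwise

variable {A : Type} [AddCommGroup A] [Module R A] {x : R}

lemma exact_smul_mkQ : Function.Exact (x • LinearMap.id : A →ₗ[R] A)
    (x • (⊤ : Submodule R A)).mkQ :=
  LinearMap.exact_lsmul_mkQ_smul_top A x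

/-- Nakayama's lemma: dividing `A` by an `A`-regular element of `p` shifts the presence of `p` in
the supports of the homology by one degree. -/
lemma mem_support_hy_quotSMulTop (hI : ∀ i, Injective (I.X i)) {i j : ℤ} (hij : j + 1 = i)
    (hx : IsSMulRegular A x) [Module.Finite R (hy I i A)] {p : PrimeSpectrum R} (hxp : x ∈ p.1)
    (hp : p ∈ Module.support R (hy I i A)) :
    p ∈ Module.support R (hy I j (QuotSMulTop x A)) := by
  obtain ⟨-, δ, h, -⟩ := hy_exact I hI (f := (x • LinearMap.id : A →ₗ[R] A))
    (fun a b h => hx h)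
    (Submodule.mkQ_surjective _) exact_smul_mkQ i j hij
  have hker : LinearMap.ker δ = x • ⊤ := by
    rw [h.linearMap_ker_eq, hyMap_smul]
    exact (exact_smul_mkQ (A := hy I i A) (x := x)).linearMap_ker_eq.symm.trans
      (Submodule.ker_mkQ _)
  have hp' : p ∈ Module.support R (QuotSMulTop x (hy I i A)) := by
    rw [Module.support_quotSMulTop]
    exact ⟨hp, by simpa using hxp⟩
  refine Module.support_subset_of_injective ((x • ⊤ : Submodule R (hy I i A)).liftQ δ hker.ge) ?_
    hp'
  rw [← LinearMap.ker_eq_bot]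
  exact Submodule.ker_liftQ_eq_bot _ _ _ hker.le

lemma subsingleton_hy_quotSMulTop (hI : ∀ i, Injective (I.X i)) {i j : ℤ} (hij : j + 1 = i)
    (hx : IsSMulRegular A x) (h₁ : Subsingleton (hy I i A)) (h₂ : Subsingleton (hy I j A)) :
    Subsingleton (hy I j (QuotSMulTop x A)) := by
  obtain ⟨-, δ, -, h⟩ := hy_exact I hI (f := (x • LinearMap.id : A →ₗ[R] A))
    (fun a b h => hx h)
    (Submodule.mkQ_surjective _) exact_smul_mkQ i j hij
  exact subsingleton_of_exact h

end Regular

open RingTheory.Sequence in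
/-- The module `B` is `A / (rs) A` for a weakly `A`-regular sequence `rs`: in passing to it,
supports of homology at primes containing `rs`, and the range of vanishing of the homology, move
down by `rs.length` degrees, and a `B`-regular element extends `rs`. -/
lemma exists_quotient_by_sequence (hI : ∀ i, Injective (I.X i))
    (hfin : ∀ (i : ℤ) (N : Type) [AddCommGroup N] [Module R N] [Module.Finite R N],
      Module.Finite R (hy I i N)) (rs : List R) :
    ∀ (A : Type) [AddCommGroup A] [Module R A] [Module.Finite R A], IsWeaklyRegular A rs →
      ∃ (B : Type) (_ : AddCommGroup B) (_ : Module R B), Module.Finite R B ∧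
        (∀ (p : PrimeSpectrum R) (i : ℤ), (∀ r ∈ rs, r ∈ p.1) →
          p ∈ Module.support R (hy I i A) → p ∈ Module.support R (hy I (i - rs.length) B)) ∧
        (∀ t : ℤ, (∀ i < t, Subsingleton (hy I i A)) →
          ∀ i < t - rs.length, Subsingleton (hy I i B)) ∧
        ∀ y : R, IsSMulRegular B y → IsWeaklyRegular A (rs ++ [y]) := by
  induction rs with
  | nil =>
    intro A _ _ hA _
    exact ⟨A, _, _, hA,
      fun p i _ h => by rw [List.length_nil, Nat.cast_zero, sub_zero]; exact h,
      by simp, by simp⟩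
  | cons x rs ih =>
    intro A _ _ _ hreg
    rw [isWeaklyRegular_cons_iff] at hreg
    obtain ⟨B, _, _, hB, h₁, h₂, h₃⟩ := ih (QuotSMulTop x A) hreg.2
    refine ⟨B, _, _, hB, fun p i hp hpi => ?_, fun t ht i hi => ?_, fun y hy => ?_⟩
    · have := hfin i A
      have := h₁ p (i - 1) (fun r hr => hp r (by simp [hr]))
        (mem_support_hy_quotSMulTop hI (by simp) hreg.1 (hp x (by simp)) hpi)
      rwa [show i - ((x :: rs).length : ℤ) = i - 1 - rs.length by push_cast [List.length_cons]; ring]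
    · refine h₂ (t - 1) (fun k hk => ?_) i (by push_cast [List.length_cons] at hi; omega)
      exact subsingleton_hy_quotSMulTop hI rfl hreg.1 (ht _ (by omega)) (ht _ (by omega))
    · rw [List.cons_append, isWeaklyRegular_cons_iff]
      exact ⟨hreg.1, h₃ y hy⟩

variable [IsNoetherianRing R]

/-- If `I` is bounded above with finitely generated homology, then `H_i(Hom_R(N, I))` is finitely
generated for every finitely generated `N`. The reduction is by descending induction on `i`,
filtering `N` by modules `R/p` and presenting `R/p` by `R`. -/
lemma finite_hy (hI : ∀ i, Injective (I.X i)) {n : ℤ} (hn : ∀ i > n, IsZero (I.X i))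
    (hfin : ∀ i, Module.Finite R (hy I i R)) (i : ℤ) (N : Type) [AddCommGroup N] [Module R N]
    [hN : Module.Finite R N] : Module.Finite R (hy I i N) := by
  suffices H : ∀ (k : ℕ) (i : ℤ), n < i + k → ∀ (N : Type) [AddCommGroup N] [Module R N]
      [Module.Finite R N], Module.Finite R (hy I i N) from
    H (n + 1 - i).toNat i (by omega) N
  intro k
  induction k with
  | zero =>
    intro i hi N _ _ _
    have := subsingleton_hy_of_isZero_X (N := N) I i (hn i (by simpa using hi))
    infer_instance
  | succ k ih =>
    intro i hi N _ _ hN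
    induction hN using IsNoetherianRing.induction_on_isQuotientEquivQuotientPrime with
    | subsingleton N =>
      have := subsingleton_hy_of_subsingleton (N := N) I i
      infer_instance
    | quotient N p e =>
      obtain ⟨-, δ, -, h⟩ := hy_exact I hI (f := (p.1).subtype) (g := (p.1).mkQ)
        (Submodule.injective_subtype _) (Submodule.mkQ_surjective _)
        (LinearMap.exact_subtype_mkQ _) (i + 1) i rfl
      have := ih (i + 1) (by push_cast at hi; omega) p.1
      have := hfin i
      have := finite_of_exact h
      exact Module.Finite.equiv (hyEquiv I i e)
    | exact N₁ N₂ N₃ f g hf hg hfg h₁ h₃ =>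
      have h := (hy_exact I hI hf hg hfg i (i - 1) (by simp)).1
      exact finite_of_exact h

/-- A prime in the support of `H_i(Hom_R(N, I))` already occurs for some `R/q` in a prime
filtration of `N`. -/
lemma exists_prime_mem_support_hy (hI : ∀ i, Injective (I.X i)) (i : ℤ) (N : Type)
    [AddCommGroup N] [Module R N] [hN : Module.Finite R N] (p : PrimeSpectrum R)
    (hp : p ∈ Module.support R (hy I i N)) :
    ∃ q ∈ Module.support R N, p ∈ Module.support R (hy I i (R ⧸ q.1)) := by
  induction hN using IsNoetherianRing.induction_on_isQuotientEquivQuotientPrime with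
  | subsingleton N =>
    have := subsingleton_hy_of_subsingleton (N := N) I i
    rw [Module.support_eq_empty] at hp
    exact hp.elim
  | quotient N q e =>
    refine ⟨q, ?_, ?_⟩
    · rw [Module.mem_support_iff_of_finite, e.annihilator_eq, Ideal.annihilator_quotient]
    · rwa [(hyEquiv I i e).support_eq]
  | exact N₁ N₂ N₃ f g hf hg hfg h₁ h₃ =>
    have h := (hy_exact I hI hf hg hfg i (i - 1) (by simp)).1
    rcases mem_support_of_exact h hp with h | h
    · obtain ⟨q, hq, hpq⟩ := h₃ h
      exact ⟨q, Module.support_subset_of_surjective g hg hq, hpq⟩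
    · obtain ⟨q, hq, hpq⟩ := h₁ h
      exact ⟨q, Module.support_subset_of_injective f hf hq, hpq⟩

/-- Bass's lemma: if `p` is in the support of `H_i(Hom_R(R/p, I))` and `p < q`, then `q` is in the
support of `H_j(Hom_R(R/q, I))` for some `j < i`. -/
lemma exists_lt_mem_support_hy (hI : ∀ i, Injective (I.X i))
    (hfin : ∀ (i : ℤ) (N : Type) [AddCommGroup N] [Module R N] [Module.Finite R N],
      Module.Finite R (hy I i N)) {q : PrimeSpectrum R} (p : PrimeSpectrum R) (i : ℤ)
    (hp : q ∈ Module.support R (hy I i (R ⧸ p.1))) (hpq : p < q) :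
    ∃ j < i, q ∈ Module.support R (hy I j (R ⧸ q.1)) := by
  have hwf : WellFounded fun a b : PrimeSpectrum R => a.1 > b.1 :=
    InvImage.wf (fun a : PrimeSpectrum R => a.1) wellFounded_gt
  induction p using hwf.induction generalizing i with
  | _ p ih =>
    obtain ⟨hle, x, hxq, hxp⟩ := SetLike.lt_iff_le_and_exists.mp (show p.1 < q.1 from hpq)
    have hx : IsSMulRegular (R ⧸ p.1) x := by
      rw [isSMulRegular_iff_right_eq_zero_of_smul]
      intro a ha
      obtain ⟨a, rfl⟩ := Ideal.Quotient.mk_surjective a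
      rw [← Ideal.Quotient.mk_eq_mk, ← Submodule.Quotient.mk_smul, smul_eq_mul,
        Ideal.Quotient.mk_eq_mk, Ideal.Quotient.eq_zero_iff_mem] at ha
      exact Ideal.Quotient.eq_zero_iff_mem.mpr ((p.2.mem_or_mem ha).resolve_left hxp)
    have := hfin i (R ⧸ p.1)
    obtain ⟨q', hq', hqq'⟩ := exists_prime_mem_support_hy hI (i - 1) (QuotSMulTop x (R ⧸ p.1)) q
      (mem_support_hy_quotSMulTop hI (by simp) hx hxq hp)
    rw [Module.support_quotSMulTop] at hq'
    have hpq' : p.1 ≤ q'.1 := by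
      simpa [Ideal.annihilator_quotient] using Module.annihilator_le_of_mem_support hq'.1
    have hxq' : x ∈ q'.1 := by simpa using hq'.2
    rcases (le_of_mem_support_hy hqq').eq_or_lt with rfl | hlt
    · exact ⟨i - 1, by omega, hqq'⟩
    · obtain ⟨j, hj, h⟩ := ih q'
        (SetLike.lt_iff_le_and_exists.mpr ⟨hpq', x, hxq', hxp⟩) (i - 1) hqq' hlt
      exact ⟨j, by omega, h⟩

lemma exists_le_mem_support_hy (hI : ∀ i, Injective (I.X i))
    (hfin : ∀ (i : ℤ) (N : Type) [AddCommGroup N] [Module R N] [Module.Finite R N],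
      Module.Finite R (hy I i N)) {q p : PrimeSpectrum R} (i : ℤ)
    (hp : q ∈ Module.support R (hy I i (R ⧸ p.1))) :
    ∃ j ≤ i, q ∈ Module.support R (hy I j (R ⧸ q.1)) := by
  rcases (le_of_mem_support_hy hp).eq_or_lt with rfl | hlt
  · exact ⟨i, le_rfl, hp⟩
  · obtain ⟨j, hj, h⟩ := exists_lt_mem_support_hy hI hfin p i hp hlt
    exact ⟨j, hj.le, h⟩

/-- Iterating Bass's lemma along a chain of primes. -/
lemma exists_mem_support_hy_of_chain (hI : ∀ i, Injective (I.X i))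
    (hfin : ∀ (i : ℤ) (N : Type) [AddCommGroup N] [Module R N] [Module.Finite R N],
      Module.Finite R (hy I i N)) (d : ℕ) (c : Fin (d + 1) → PrimeSpectrum R) (hc : StrictMono c)
    (i : ℤ) (h₀ : c 0 ∈ Module.support R (hy I i (R ⧸ (c 0).1))) (k : Fin (d + 1)) :
    ∃ j, j + (k : ℕ) ≤ i ∧ c k ∈ Module.support R (hy I j (R ⧸ (c k).1)) := by
  induction k using Fin.induction with
  | zero => exact ⟨i, by simp, h₀⟩
  | succ k ih =>
    obtain ⟨j, hj, h⟩ := ih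
    have hlt := hc k.castSucc_lt_succ
    obtain ⟨j', hj', h'⟩ := exists_lt_mem_support_hy hI hfin _ j
      (Module.mem_support_mono hlt.le h) hlt
    refine ⟨j', ?_, h'⟩
    simp only [Fin.val_succ, Fin.val_castSucc] at hj ⊢
    push_cast
    omega

end Support

/-! ### The dimension inequality -/

section Inequality

open RingTheory.Sequence

/-- The residue field embeds into a finitely generated module on which no element of the maximal
ideal is regular. -/
lemma exists_residue_injective {R : Type} [CommRing R] [IsNoetherianRing R] [IsLocalRing R]
    {B : Type} [AddCommGroup B] [Module R B] [Module.Finite R B]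
    (hB : ∀ y ∈ IsLocalRing.maximalIdeal R, ¬ IsSMulRegular B y) :
    ∃ f : (R ⧸ IsLocalRing.maximalIdeal R) →ₗ[R] B, Function.Injective f := by
  have h : ¬ Subsingleton ((R ⧸ IsLocalRing.maximalIdeal R) →ₗ[R] B) := by
    rw [IsSMulRegular.subsingleton_linearMap_iff, Ideal.annihilator_quotient]
    rintro ⟨y, hy, h⟩
    exact hB y hy h
  rw [not_subsingleton_iff_nontrivial] at h
  obtain ⟨f, hf⟩ := exists_ne (0 : (R ⧸ IsLocalRing.maximalIdeal R) →ₗ[R] B)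
  have : IsSimpleModule R (R ⧸ IsLocalRing.maximalIdeal R) :=
    isSimpleModule_iff_isCoatom.mpr (IsLocalRing.maximalIdeal.isMaximal R).out
  exact ⟨f, LinearMap.injective_of_ne_zero hf⟩

/-- Let `H_i(I)` vanish for `i < t`, let `c` be a chain of primes of length `d` whose smallest member
lies in the support of `H_t(I)` and contains the weakly regular sequence `rs`. Then
`length rs + d ≤ length rs'` for every weakly regular sequence `rs'` that cannot be extended by an
element of the maximal ideal. -/
lemma length_add_length_le {R : Type} [CommRing R] [IsNoetherianRing R] [IsLocalRing R]
    {I : ChainComplex (ModuleCat.{0} R) ℤ} (hI : ∀ i, Injective (I.X i))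
    (hfin : ∀ (i : ℤ) (N : Type) [AddCommGroup N] [Module R N] [Module.Finite R N],
      Module.Finite R (hy I i N))
    {lo : ℤ} (hlo : ∀ i < lo, IsZero (I.X i)) {t : ℤ}
    (ht : ∀ i < t, Subsingleton (hy I i R)) (d : ℕ) (c : Fin (d + 1) → PrimeSpectrum R)
    (hc : StrictMono c) (hct : c 0 ∈ Module.support R (hy I t R))
    {rs : List R} (hrs : IsWeaklyRegular R rs) (hrsc : ∀ r ∈ rs, r ∈ (c 0).1)
    {rs' : List R} (hrs' : IsWeaklyRegular R rs')
    (hmax : ∀ y ∈ IsLocalRing.maximalIdeal R, ¬ IsWeaklyRegular R (rs' ++ [y])) :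
    rs.length + d ≤ rs'.length := by
  set m := IsLocalRing.closedPoint R
  have hm : m.1 = IsLocalRing.maximalIdeal R := rfl
  have hlem : ∀ p : PrimeSpectrum R, p ≤ m := fun p => IsLocalRing.le_maximalIdeal p.2.ne_top
  -- Passing to `R/(rs)` lowers the degree `t` by `length rs`, and climbing `c` lowers it by `d`.
  obtain ⟨j, hj, hmj⟩ : ∃ j, j + (d : ℤ) + rs.length ≤ t ∧
      m ∈ Module.support R (hy I j (R ⧸ m.1)) := by
    obtain ⟨B, _, _, hB, h₁, -, -⟩ := exists_quotient_by_sequence hI hfin rs R hrs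
    obtain ⟨q, -, hq⟩ := exists_prime_mem_support_hy hI (t - rs.length) B (c 0)
      (h₁ _ t hrsc hct)
    obtain ⟨j, hj, h₀⟩ := exists_le_mem_support_hy hI hfin _ hq
    obtain ⟨k, hk, h⟩ := exists_mem_support_hy_of_chain hI hfin d c hc j h₀ (Fin.last d)
    obtain ⟨l, hl, h'⟩ := exists_le_mem_support_hy hI hfin _
      (Module.mem_support_mono (hlem _) h)
    refine ⟨l, ?_, h'⟩
    rw [Fin.val_last] at hk
    omega
  -- The least degree in which the homology for some finitely generated module is nonzero.
  let P : ℤ → Prop := fun i => ∃ (N : Type) (_ : AddCommGroup N) (_ : Module R N),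
    Module.Finite R N ∧ Nontrivial (hy I i N)
  obtain ⟨j₀, ⟨N, _, _, hN, hne⟩, hmin⟩ := Int.exists_least_of_bdd (P := P)
    ⟨lo, fun i ⟨N, _, _, _, h⟩ => by
      by_contra hi
      have := subsingleton_hy_of_isZero_X (N := N) I i (hlo i (by omega))
      exact not_subsingleton _ this⟩
    ⟨j, _, _, _, inferInstance, Module.nonempty_support_iff.mp ⟨m, hmj⟩⟩
  have hvan : ∀ i < j₀, ∀ (N : Type) [AddCommGroup N] [Module R N] [Module.Finite R N],
      Subsingleton (hy I i N) := fun i hi N _ _ _ => by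
    by_contra h
    exact absurd (hmin i ⟨N, _, _, inferInstance, not_subsingleton_iff_nontrivial.mp h⟩)
      (by omega)
  have hj₀ : j₀ ≤ j :=
    hmin j ⟨_, _, _, inferInstance, Module.nonempty_support_iff.mp ⟨m, hmj⟩⟩
  -- A prime filtration and Bass's lemma reach the residue field, and minimality of `j₀` keeps the
  -- degree from dropping.
  have hk : Nontrivial (hy I j₀ (R ⧸ m.1)) := by
    obtain ⟨p, hp⟩ := (Module.nonempty_support_iff (R := R)).mpr hne
    obtain ⟨q, -, hq⟩ := exists_prime_mem_support_hy hI j₀ N m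
      (Module.mem_support_mono (hlem p) hp)
    obtain ⟨l, hl, h⟩ := exists_le_mem_support_hy hI hfin _ hq
    have hl' := hmin l ⟨_, _, _, inferInstance, Module.nonempty_support_iff.mp ⟨m, h⟩⟩
    obtain rfl : l = j₀ := by omega
    exact Module.nonempty_support_iff.mp ⟨m, h⟩
  -- By minimality it is a quotient of the homology for `R/(rs')`, which vanishes below
  -- `t - length rs'`.
  obtain ⟨B, _, _, hB, -, h₂, h₃⟩ := exists_quotient_by_sequence hI hfin rs' R hrs'
  obtain ⟨f, hf⟩ := exists_residue_injective (B := B) fun y hy h => hmax y hy (h₃ y h)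
  obtain ⟨-, δ, h, -⟩ := hy_exact I hI hf (Submodule.mkQ_surjective (LinearMap.range f))
    (LinearMap.exact_map_mkQ_range f) j₀ (j₀ - 1) (by simp)
  have hBn : ¬ Subsingleton (hy I j₀ B) := fun hs => by
    have := hvan (j₀ - 1) (by omega) (B ⧸ LinearMap.range f)
    exact not_subsingleton_iff_nontrivial.mpr hk (subsingleton_of_exact h)
  have : t - rs'.length ≤ j₀ := not_lt.mp fun hlt => hBn (h₂ t ht j₀ hlt)
  omega

end Inequality

/-! ### Dimension, grade and depth -/

section Conclusion

open RingTheory.Sequence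

variable {R : Type} [CommRing R]

lemma coe_moduleDim (M : Type) [AddCommGroup M] [Module R M] [Nontrivial M] :
    (moduleDim R M : WithBot ℕ∞) = Module.supportDim R M := by
  have : Nonempty (Module.support R M) := Module.nonempty_support_iff.mpr ‹_› |>.to_subtype
  rw [Module.supportDim, Order.krullDim_eq_iSup_length]
  rfl

lemma subsingleton_extMod_of_le_extGrade {M N : Type} [AddCommGroup M] [Module R M]
    [AddCommGroup N] [Module R N] {n : ℕ} (h : (n : ℕ∞) ≤ extGrade R M N) (i : ℕ) (hi : i < n) :
    Subsingleton (extMod R M N i) := by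
  by_contra hne
  have : extGrade R M N ≤ i := sInf_le ⟨i, rfl, not_subsingleton_iff_nontrivial.mp hne⟩
  exact absurd (Nat.cast_le.mp (h.trans this)) (by omega)

variable [IsLocalRing R]

/-- A finite depth is attained by a maximal regular sequence. -/
lemma exists_maximal_sequence (h : moduleDepth R R ≠ ⊤) :
    ∃ rs : List R, (rs.length : ℕ∞) ≤ moduleDepth R R ∧ IsWeaklyRegular R rs ∧
      ∀ y ∈ IsLocalRing.maximalIdeal R, ¬ IsWeaklyRegular R (rs ++ [y]) := by
  have : Nonempty {l : List R // (∀ r ∈ l, r ∈ IsLocalRing.maximalIdeal R) ∧ IsRegular R l} :=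
    ⟨[], by simp, IsRegular.nil R R⟩
  have hdepth : moduleDepth R R = ⨆ rs : {l : List R //
    (∀ r ∈ l, r ∈ IsLocalRing.maximalIdeal R) ∧ IsRegular R l}, (rs.1.length : ℕ∞) := rfl
  obtain ⟨⟨rs, hrs, hreg⟩, hlen⟩ := ENat.exists_eq_iSup_of_lt_top (lt_top_iff_ne_top.mpr h)
  refine ⟨rs, (hlen.trans hdepth.symm).le, hreg.toIsWeaklyRegular, fun y hy hw => ?_⟩
  have hmem : ∀ r ∈ rs ++ [y], r ∈ IsLocalRing.maximalIdeal R := by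
    simpa [or_imp, forall_and] using ⟨hrs, hy⟩
  have hle := le_iSup (fun l : {l : List R //
    (∀ r ∈ l, r ∈ IsLocalRing.maximalIdeal R) ∧ IsRegular R l} => (l.1.length : ℕ∞))
    ⟨rs ++ [y], hmem, (IsLocalRing.isRegular_iff_isWeaklyRegular_of_subset_maximalIdeal hmem).mpr
      hw⟩
  rw [← hlen] at hle
  simp only [List.length_append, List.length_singleton, Nat.cast_le] at hle
  omega

variable [IsNoetherianRing R]

lemma moduleDepth_le_moduleDim : moduleDepth R R ≤ moduleDim R R := by
  refine iSup_le fun ⟨rs, hrs, hreg⟩ => ?_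
  have h := ringKrullDim_add_length_eq_ringKrullDim_of_isRegular rs hreg
  rw [← WithBot.coe_le_coe, coe_moduleDim, Module.supportDim_self_eq_ringKrullDim, ← h]
  have hne : Ideal.ofList rs ≠ ⊤ := fun h => (IsLocalRing.maximalIdeal.isMaximal R).ne_top
    (top_le_iff.mp (h ▸ Ideal.span_le.mpr hrs))
  have : Nontrivial (R ⧸ Ideal.ofList rs) := Ideal.Quotient.nontrivial_iff.mpr hne
  have h0 := ringKrullDim_nonneg_of_nontrivial (R := R ⧸ Ideal.ofList rs)
  simpa using add_le_add_left h0 (rs.length : WithBot ℕ∞)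

/-- `dim M + grade M` is at most the length of a weakly regular sequence that cannot be extended by
an element of the maximal ideal. The lowest nonzero homology of a quasi-injective resolution of `M`
has the support of `M`, which makes `length_add_length_le` applicable to every chain in that support
and every weakly regular sequence in the annihilator of `M`. -/
lemma dim_add_grade_le {M : Type} [AddCommGroup M] [Module R M] [Module.Finite R M] [Nontrivial M]
    (hqid : qid R M ≠ ⊤) {rs' : List R} (hrs' : IsWeaklyRegular R rs')
    (hmax : ∀ y ∈ IsLocalRing.maximalIdeal R, ¬ IsWeaklyRegular R (rs' ++ [y])) :
    moduleDim R M + extGrade R M R ≤ rs'.length := by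
  obtain ⟨-, k, -, I, ⟨hI, ⟨hi, hhi⟩, b, hb, e⟩, h, -, hlo⟩ :
      {c : ℕ∞ | ∃ n : ℕ, c = n ∧ ∃ I : ChainComplex (ModuleCat.{0} R) ℤ,
        IsQuasiInjRes R I M ∧
        ∃ h : ℤ, ¬ IsZero (I.homology h) ∧ ∀ i, i < h - n → IsZero (I.X i)}.Nonempty := by
    by_contra hne
    rw [Set.not_nonempty_iff_eq_empty] at hne
    exact hqid ((congrArg sInf hne).trans sInf_empty)
  have e' : ∀ i, Nonempty (hy I i R ≃ₗ[R] (Fin (b i) → M)) := fun i =>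
    (e i).map fun e => (hySelf I i).trans e.toLinearEquiv
  have hfin : ∀ (i : ℤ) (N : Type) [AddCommGroup N] [Module R N] [Module.Finite R N],
      Module.Finite R (hy I i N) := fun i N _ _ _ =>
    finite_hy hI hhi (fun i => (e' i).elim fun e => Module.Finite.equiv e.symm) i N
  obtain ⟨t, ht, hmin⟩ := Int.exists_least_of_bdd (P := fun i => 0 < b i)
    ⟨h - k, fun i hbi => by
      by_contra hik
      have := subsingleton_hy_of_isZero_X (N := R) I i (hlo i (by omega))
      have hs := (e' i).some.symm.subsingleton
      have : Nonempty (Fin (b i)) := ⟨⟨0, hbi⟩⟩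
      exact not_subsingleton _ hs⟩ hb
  have hvan : ∀ i < t, Subsingleton (hy I i R) := fun i hit => by
    have hbi : b i = 0 := by
      by_contra hbi
      exact absurd (hmin i (Nat.pos_of_ne_zero hbi)) (by omega)
    have : IsEmpty (Fin (b i)) := by rw [hbi]; infer_instance
    exact (e' i).some.subsingleton
  have hsupp : Module.support R M ⊆ Module.support R (hy I t R) := by
    rw [(e' t).some.support_eq]
    exact Module.support_subset_of_injective (LinearMap.single R (fun _ : Fin (b t) => M) ⟨0, ht⟩)
      fun x y h => by
        simpa using congrFun h ⟨0, ht⟩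
  have : Nonempty (LTSeries (Module.support R M)) :=
    have : Nonempty (Module.support R M) := (Module.nonempty_support_iff.mpr ‹_›).to_subtype
    inferInstance
  rw [moduleDim, ENat.iSup_add]
  refine iSup_le fun c => ?_
  have key : ∀ n : ℕ, (n : ℕ∞) ≤ extGrade R M R → n + c.length ≤ rs'.length := fun n hn => by
    obtain ⟨rs, rfl, hann, hrs⟩ := exists_isWeaklyRegular_of_extMod (M := M) n R
      (subsingleton_extMod_of_le_extGrade hn)
    exact length_add_length_le hI hfin hlo hvan c.length (fun k => (c k).1)
      (fun k l hkl => c.strictMono hkl) (hsupp (c 0).2) hrs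
      (fun r hr => Module.annihilator_le_of_mem_support (c 0).2 (hann r hr)) hrs' hmax
  have hg : extGrade R M R ≤ (rs'.length - c.length : ℕ) :=
    ENat.forall_natCast_le_iff_le.mp fun n hn =>
      Nat.cast_le.mpr (Nat.le_sub_of_add_le (key n hn))
  have h0 := key 0 (by simp)
  refine (add_le_add_right hg _).trans ?_
  rw [← Nat.cast_add, Nat.cast_le]
  omega

end Conclusion

end QidCM

/-- If a Noetherian local ring admits a nonzero module `M` with `qid_R M < ∞` and
`dim R = dim M + grade M`, then `R` is Cohen–Macaulay. -/
theorem stmt18 (R : Type) [CommRing R] [IsNoetherianRing R] [IsLocalRing R]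
    (M : Type) [AddCommGroup M] [Module R M] [Module.Finite R M] (hM : Nontrivial M)
    (hqid : qid R M ≠ ⊤)
    (hdim : moduleDim R R = moduleDim R M + extGrade R M R) :
    moduleDim R R = moduleDepth R R := by
  refine le_antisymm ?_ QidCM.moduleDepth_le_moduleDim
  by_cases htop : moduleDepth R R = ⊤
  · rw [htop]
    exact le_top
  · obtain ⟨rs, hlen, hrs, hmax⟩ := QidCM.exists_maximal_sequence htop
    rw [hdim]
    exact (QidCM.dim_add_grade_le hqid hrs hmax).trans hlen
end

section
/- Let R be a Noetherian ring, and M, N, L nonzero finitely generated R-modules with qpd_R N < ∞ and qpd_R L < ∞. If Supp M ⊆ Supp L, then grade(L,R) + grade(M,L) ≤ grade(M,N) + qpd_R N. -/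
/-!
The inequality is the sum of two others, both proved without localization:

* `grade(M, R) ≤ grade(M, N) + qpd N`  (`QP.extGrade_self_le`),
* `grade(L, R) + grade(M, L) ≤ grade(M, R)`  (`QP.add_extGrade_le`).

Let `P` be a bounded quasi-projective resolution of `N` or of `L`. The functors
`G_j(A) = H_j(A ⊗ P)` form a bounded homological functor (`QP.HFun`), and every `G_j(R) = H_j(P)` is a
finite power of `N` or `L`. Let `s` be the top degree with `G_s(R) ≠ 0`. The vanishing of
`Ext^i(M, -)` enters only through formal properties (`QP.Van`), which together with
`Hom(M, A) = 0 ↔ Ann M` contains an `A`-regular element allow everything to be proved by passing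
from `A` to `A/xA`, beginning with `A = R`.

If `x ∈ Ann M` is regular on `A` and on all `G_j(A)`, then `G_j(A/xA) = G_j(A)/x`, and both kinds of
grade drop by one. If `x` is regular on `A` only, then `G_{s+1}(A/xA)` is the `x`-torsion of `G_s(A)`,
so the top degree goes up by one while a submodule of `G_s(A)` killed by `Ann M` survives in the new
top degree (`QP.exists_mem_support`).

For the first inequality, divide by elements of the first kind `grade(M, N)` times, until `M` maps
nontrivially to the top `G_s`, then by elements of the second kind (`QP.add_le_top`): the top degree
reached is bounded by that of `P`, which is at most `s + qpd N`.

For the second, the same reduction down to `grade(M, A) = 0` gives `p ∈ Supp M` such that the top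
degree `b` with `p ∈ Supp G_b(R/p)` satisfies `b + grade(M, L) ≤ s + grade(M, R)`
(`QP.exists_prime`). As `p ∈ Supp L`, applying `QP.exists_mem_support` to `L` and `W = G_s(R)` gives
`p ∈ Supp G_{s + grade(L, R)}(B)` for some finitely generated `B`, and the bound `b` for `R/p` is a
bound for all finitely generated modules (`QP.HFun.notMem_support`), whence
`s + grade(L, R) ≤ b`.
-/

open CategoryTheory CategoryTheory.Limits Opposite

noncomputable section

namespace QP

variable {R : Type} [CommRing R]

/-! ### Long exact homology sequences of degreewise exact functors to complexes -/

section Generic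
variable {ι : Type} {c : ComplexShape ι}
  (Φ : ModuleCat.{0} R ⥤ HomologicalComplex (ModuleCat.{0} R) c) [Φ.PreservesZeroMorphisms]

lemma cx_shortExact
    (hΦ : ∀ S : ShortComplex (ModuleCat.{0} R), S.ShortExact → ∀ i,
      Function.Injective ((Φ.map S.f).f i) ∧ Function.Exact ((Φ.map S.f).f i) ((Φ.map S.g).f i) ∧
      Function.Surjective ((Φ.map S.g).f i))
    {S : ShortComplex (ModuleCat.{0} R)} (hS : S.ShortExact) : (S.map Φ).ShortExact := by
  refine HomologicalComplex.shortExact_of_degreewise_shortExact _ fun i => ?_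
  obtain ⟨h1, h2, h3⟩ := hΦ S hS i
  exact
    { exact := (ShortComplex.ShortExact.moduleCat_exact_iff_function_exact _).2 h2
      mono_f := (ModuleCat.mono_iff_injective _).2 h1
      epi_g := (ModuleCat.epi_iff_surjective _).2 h3 }

/-- Exactness of the long exact homology sequence in the middle; `cx_ex₃` and `cx_ex₁` are the
spots before and after the connecting map. -/
lemma cx_ex₂ {S : ShortComplex (ModuleCat.{0} R)} (hS : (S.map Φ).ShortExact) (i : ι) :
    Function.Exact (HomologicalComplex.homologyMap (Φ.map S.f) i)
      (HomologicalComplex.homologyMap (Φ.map S.g) i) :=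
  (ShortComplex.ShortExact.moduleCat_exact_iff_function_exact _).1 (hS.homology_exact₂ i)

lemma cx_ex₃ {S : ShortComplex (ModuleCat.{0} R)} (hS : (S.map Φ).ShortExact) (i j : ι)
    (hij : c.Rel i j) :
    Function.Exact (HomologicalComplex.homologyMap (Φ.map S.g) i) (hS.δ i j hij) :=
  (ShortComplex.ShortExact.moduleCat_exact_iff_function_exact _).1 (hS.homology_exact₃ i j hij)

lemma cx_ex₁ {S : ShortComplex (ModuleCat.{0} R)} (hS : (S.map Φ).ShortExact) (i j : ι)
    (hij : c.Rel i j) :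
    Function.Exact (hS.δ i j hij) (HomologicalComplex.homologyMap (Φ.map S.f) j) :=
  (ShortComplex.ShortExact.moduleCat_exact_iff_function_exact _).1 (hS.homology_exact₁ i j hij)

lemma homologyMap_smul_id (x : R) (K : HomologicalComplex (ModuleCat.{0} R) c) (i : ι) :
    HomologicalComplex.homologyMap (x • 𝟙 K) i = x • 𝟙 (K.homology i) := by
  have := ShortComplex.homologyMap_smul (𝟙 (K.sc i)) x
  rw [ShortComplex.homologyMap_id] at this
  exact this

lemma homologyMap_apply_of_eq_smul (x : R) {K : HomologicalComplex (ModuleCat.{0} R) c}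
    (f : K ⟶ K) (h : f = x • 𝟙 K) (i : ι) (z : K.homology i) :
    HomologicalComplex.homologyMap f i z = x • z := by
  rw [h, homologyMap_smul_id]
  rfl

end Generic

/-! ### The complexes `A ⊗ P` -/
open TensorProduct

/-- The complex `A ⊗ P`, as a functor of `A`. -/
def tensCx (P : ChainComplex (ModuleCat.{0} R) ℤ) :
    ModuleCat.{0} R ⥤ ChainComplex (ModuleCat.{0} R) ℤ where
  obj A :=
    { X := fun i => ModuleCat.of R (A ⊗[R] P.X i)
      d := fun i j => ModuleCat.ofHom ((P.d i j).hom.lTensor A)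
      shape := fun i j h => by
        rw [P.shape i j h]; ext1; simp
      d_comp_d' := fun i j k _ _ => by
        ext1
        rw [ModuleCat.hom_comp, ModuleCat.hom_ofHom, ModuleCat.hom_ofHom, ← LinearMap.lTensor_comp,
          ← ModuleCat.hom_comp, P.d_comp_d]
        simp }
  map f :=
    { f := fun i => ModuleCat.ofHom (f.hom.rTensor (P.X i))
      comm' := fun i j _ => by
        ext1
        simp only [ModuleCat.hom_comp, ModuleCat.hom_ofHom]
        rw [LinearMap.lTensor_comp_rTensor, LinearMap.rTensor_comp_lTensor] }
  map_id A := by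
    ext i : 2
    simp
  map_comp f g := by
    ext i : 2
    simp [LinearMap.rTensor_comp]

instance (P : ChainComplex (ModuleCat.{0} R) ℤ) : (tensCx P).PreservesZeroMorphisms where
  map_zero A B := by
    ext i : 2
    simp [tensCx]
    rfl

lemma tensCx_smul (P : ChainComplex (ModuleCat.{0} R) ℤ) (x : R) (A : ModuleCat.{0} R) :
    (tensCx P).map (x • 𝟙 A) = x • 𝟙 ((tensCx P).obj A) := by
  ext i : 2
  simp [tensCx, LinearMap.rTensor_smul]
  rfl

lemma tensCx_exact (P : ChainComplex (ModuleCat.{0} R) ℤ) (hP : ∀ i, Projective (P.X i))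
    {S : ShortComplex (ModuleCat.{0} R)} (hS : S.ShortExact) : (S.map (tensCx P)).ShortExact := by
  refine cx_shortExact _ (fun S hS i => ?_) hS
  have : Module.Projective R (P.X i) := (IsProjective.iff_projective _).2 (hP i)
  have : Module.Flat R (P.X i) := inferInstance
  refine ⟨Module.Flat.rTensor_preserves_injective_linearMap _ hS.moduleCat_injective_f,
    Module.Flat.rTensor_exact _
      ((ShortComplex.ShortExact.moduleCat_exact_iff_function_exact _).1 hS.exact),
    LinearMap.rTensor_surjective _ hS.moduleCat_surjective_g⟩

/-- The isomorphism of complexes `R ⊗ P ≅ P`. -/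
def tensCxUnit (P : ChainComplex (ModuleCat.{0} R) ℤ) :
    (tensCx P).obj (ModuleCat.of R R) ≅ P :=
  HomologicalComplex.Hom.isoOfComponents (fun i => (TensorProduct.lid R (P.X i)).toModuleIso)
    (fun i j _ => by
      ext1
      simp only [ModuleCat.hom_comp]
      apply TensorProduct.ext'
      intro a b
      change (P.d i j).hom (a • b) = a • (P.d i j).hom b
      exact map_smul _ _ _)

lemma subsingleton_homology_tensCx (P : ChainComplex (ModuleCat.{0} R) ℤ) (A : ModuleCat.{0} R)
    (j : ℤ) (h : IsZero (P.X j)) : Subsingleton (((tensCx P).obj A).homology j) := by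
  have : Subsingleton (P.X j) := ModuleCat.isZero_iff_subsingleton.1 h
  have h1 : IsZero (((tensCx P).obj A).X j) := by
    rw [ModuleCat.isZero_iff_subsingleton]
    exact (inferInstance : Subsingleton (A ⊗[R] P.X j))
  rw [← ModuleCat.isZero_iff_subsingleton, ← HomologicalComplex.exactAt_iff_isZero_homology]
  exact ShortComplex.exact_of_isZero_X₂ _ h1

/-! ### The complexes `Hom(F, Y)` -/

/-- The complex `Hom(F, Y)`, as a functor of `Y`. On objects it is the complex used in
`CategoryTheory.ProjectiveResolution.isoExt`, so its homology is Ext. -/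
def homCx (F : ChainComplex (ModuleCat.{0} R) ℕ) :
    ModuleCat.{0} R ⥤ CochainComplex (ModuleCat.{0} R) ℕ where
  obj Y := F.linearYonedaObj R Y
  map f :=
    { f := fun i => ModuleCat.ofHom (Linear.rightComp R (F.X i) f)
      comm' := fun i j _ => by
        refine ModuleCat.hom_ext (LinearMap.ext fun (x : F.X i ⟶ _) => ?_)
        exact (Category.assoc (F.d j i) x f).symm }
  map_id A := by
    ext i : 1
    exact ModuleCat.hom_ext (LinearMap.ext fun (x : F.X i ⟶ _) => Category.comp_id x)
  map_comp f g := by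
    ext i : 1
    exact ModuleCat.hom_ext (LinearMap.ext fun (x : F.X i ⟶ _) => (Category.assoc x f g).symm)

instance (F : ChainComplex (ModuleCat.{0} R) ℕ) : (homCx F).PreservesZeroMorphisms where
  map_zero A B := by
    ext i : 1
    exact ModuleCat.hom_ext (LinearMap.ext fun (x : F.X i ⟶ _) => comp_zero (f := x))

lemma homCx_smul (F : ChainComplex (ModuleCat.{0} R) ℕ) (x : R) (A : ModuleCat.{0} R) :
    (homCx F).map (x • 𝟙 A) = x • 𝟙 ((homCx F).obj A) := by
  ext i : 1
  refine ModuleCat.hom_ext (LinearMap.ext fun (y : F.X i ⟶ _) => ?_)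
  exact (Linear.comp_smul _ _ _ y x (𝟙 A)).trans (congrArg (x • ·) (Category.comp_id y))

lemma homCx_exact (F : ChainComplex (ModuleCat.{0} R) ℕ) (hF : ∀ i, Projective (F.X i))
    {S : ShortComplex (ModuleCat.{0} R)} (hS : S.ShortExact) : (S.map (homCx F)).ShortExact := by
  refine cx_shortExact _ (fun S hS i => ?_) hS
  have := hS.mono_f
  have := hS.epi_g
  have := hF i
  refine ⟨fun a b h => (cancel_mono S.f).1 h, fun (y : F.X i ⟶ S.X₂) => ⟨fun h => ?_, ?_⟩,
    fun (y : F.X i ⟶ S.X₃) => ⟨Projective.factorThru y S.g, Projective.factorThru_comp y S.g⟩⟩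
  · exact ⟨hS.exact.lift y h, hS.exact.lift_f y h⟩
  · rintro ⟨(z : F.X i ⟶ S.X₁), rfl⟩
    exact (Category.assoc z S.f S.g).trans ((congrArg (z ≫ ·) S.zero).trans comp_zero)

/-! ### Vanishing of Ext -/

lemma smul_eq_zero_of_id {X M : ModuleCat.{0} R} (x : R) (h : x • 𝟙 M = 0) (f : X ⟶ M) :
    x • f = 0 := by
  rw [← Category.comp_id f, ← Linear.comp_smul, h, comp_zero]

lemma sub_mid {X Y Z : ModuleCat.{0} R} (f : X ⟶ Y) (g : Y ⟶ Z) (h : Function.Exact f g)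
    (hX : Subsingleton X) (hg : ∀ y, g y = 0) : Subsingleton Y := by
  refine subsingleton_of_forall_eq 0 fun y => ?_
  obtain ⟨x, rfl⟩ := (h y).1 (hg y)
  rw [Subsingleton.elim x 0, map_zero]

lemma sub_retract {X Y : ModuleCat.{0} R} (f : X ⟶ Y) (g : Y ⟶ X) (h : f ≫ g = 𝟙 X)
    (hY : Subsingleton Y) : Subsingleton X := by
  refine subsingleton_of_forall_eq 0 fun x => ?_
  have e : g (f x) = x := congrArg (fun f => f.hom x) h
  rw [← e, Subsingleton.elim (f x) 0, map_zero]

/-- `Ann M` kills `Ext^n(M, A)`: multiplication by `x ∈ Ann M` on a projective resolution lifts the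
zero map of `M`, hence is null-homotopic. -/
lemma homCx_smul_homology_eq_zero {M : ModuleCat.{0} R} (P : ProjectiveResolution M) {x : R}
    (hx : x ∈ Module.annihilator R M) (A : ModuleCat.{0} R) (n : ℕ)
    (z : ((homCx P.complex).obj A).homology n) : x • z = 0 := by
  have h0 : x • 𝟙 M = (0 : M ⟶ M) := by
    ext m
    exact Module.mem_annihilator.1 hx m
  let h : Homotopy (x • 𝟙 P.complex) (0 : P.complex ⟶ P.complex) :=
    ProjectiveResolution.liftHomotopy (0 : M ⟶ M) _ _
      (by
        rw [(ChainComplex.single₀ (ModuleCat.{0} R)).map_zero, comp_zero, Linear.smul_comp,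
          Category.id_comp]
        refine HomologicalComplex.to_single_hom_ext ?_
        exact smul_eq_zero_of_id x h0 (P.π.f 0)) (by simp)
  let K := (homCx P.complex).obj A
  obtain ⟨c, hc⟩ := (ModuleCat.epi_iff_surjective (K.homologyπ n)).1 inferInstance z
  let φ : P.complex.X n ⟶ A := K.iCycles n c
  have hφ : ∀ m, P.complex.d m n ≫ φ = 0 := fun m => by
    have := K.iCycles_d n m
    exact congrArg (fun f => f.hom c) this
  let k := (ComplexShape.down ℕ).next n
  let l := (ComplexShape.down ℕ).prev n
  have h1 : x • φ = P.complex.d n k ≫ h.hom k n ≫ φ := by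
    have e : (x • 𝟙 P.complex : P.complex ⟶ P.complex).f n =
        P.complex.d n k ≫ h.hom k n + h.hom n l ≫ P.complex.d l n + 0 := h.comm n
    have e' : (x • 𝟙 P.complex : P.complex ⟶ P.complex).f n ≫ φ = x • φ := by simp
    rw [← e', e]
    simp [hφ]
  let ψ : K.X k := (h.hom k n ≫ φ : P.complex.X k ⟶ A)
  -- multiplication by `x` moves the cocycle `c` to the coboundary of `ψ`
  have h2 : x • c = K.toCycles k n ψ := by
    apply (ModuleCat.mono_iff_injective (K.iCycles n)).1 inferInstance
    rw [map_smul]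
    refine h1.trans ?_
    have := K.toCycles_i k n
    exact (congrArg (fun f => f.hom ψ) this).symm
  have h3 : x • z = K.homologyπ n (x • c) := by rw [map_smul, hc]
  rw [h3, h2]
  have := K.toCycles_comp_homologyπ k n
  exact congrArg (fun f => f.hom ψ) this

lemma homCx_homology_zero_iff {M : ModuleCat.{0} R} (P : ProjectiveResolution M)
    (A : ModuleCat.{0} R) :
    Subsingleton (((homCx P.complex).obj A).homology 0) ↔ Subsingleton (M →ₗ[R] A) := by
  set K := (homCx P.complex).obj A with hK
  rw [← ModuleCat.isZero_iff_subsingleton, ← HomologicalComplex.exactAt_iff_isZero_homology,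
    K.exactAt_iff' 0 0 1 (by simp) (by simp), ShortComplex.moduleCat_exact_iff]
  have hK0 : K.d 0 0 = 0 := K.shape _ _ (by simp)
  have hπ : P.complex.d 1 0 ≫ P.π.f 0 = 0 := P.complex_d_comp_π_f_zero
  constructor
  · intro H
    refine subsingleton_of_forall_eq 0 fun f => ?_
    let φ : P.complex.X 0 ⟶ A := P.π.f 0 ≫ ModuleCat.ofHom f
    obtain ⟨y, hy⟩ := H φ (by
      change P.complex.d 1 0 ≫ P.π.f 0 ≫ ModuleCat.ofHom f = 0
      exact (Category.assoc _ _ _).symm.trans ((congrArg (· ≫ ModuleCat.ofHom f) hπ).trans zero_comp))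
    have h0 : φ = 0 := hy.symm.trans (congrArg (fun f => f.hom y) hK0)
    have : ModuleCat.ofHom f = (0 : M ⟶ A) := by
      have : Epi (P.π.f 0) := inferInstance
      exact (cancel_epi (P.π.f 0)).1 (h0.trans comp_zero.symm)
    exact congrArg ModuleCat.Hom.hom this
  · intro H (φ : P.complex.X 0 ⟶ A) (hφ : P.complex.d 1 0 ≫ φ = 0)
    refine ⟨0, ?_⟩
    have e : φ = P.π.f 0 ≫ P.exact₀.desc φ hφ := (P.exact₀.g_desc φ hφ).symm
    have e' : P.exact₀.desc φ hφ = 0 := ModuleCat.hom_ext (Subsingleton.elim (α := M →ₗ[R] A) _ _)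
    rw [map_zero]
    rw [e'] at e
    exact (e.trans comp_zero).symm

/-- The formal properties of the predicate `V n A`, read as `Ext^n(M, A) = 0`. All the estimates
below use Ext only through these: `last` and `mid` come from the long exact sequence, and `of_quot`
holds since multiplication by `x ∈ Ann M` is zero on Ext. -/
structure Van (M : Type) [AddCommGroup M] [Module R M]
    (V : ℕ → ModuleCat.{0} R → Prop) : Prop where
  zero_iff : ∀ A, V 0 A ↔ Subsingleton (M →ₗ[R] A)
  last : ∀ S : ShortComplex (ModuleCat.{0} R), S.ShortExact → ∀ n,
    V n S.X₂ → V (n + 1) S.X₁ → V n S.X₃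
  of_quot : ∀ (A Q : ModuleCat.{0} R) (x : R) (g : A ⟶ Q) (w : (x • 𝟙 A) ≫ g = 0),
    x ∈ Module.annihilator R M → (ShortComplex.mk _ _ w).ShortExact →
    ∀ n, V n Q → V (n + 1) A
  retract : ∀ (A B : ModuleCat.{0} R) (i : A ⟶ B) (p : B ⟶ A), i ≫ p = 𝟙 A → ∀ n, V n B → V n A
  mid : ∀ S : ShortComplex (ModuleCat.{0} R), S.ShortExact → ∀ n, V n S.X₁ → V n S.X₃ → V n S.X₂

lemma extVan (M : Type) [AddCommGroup M] [Module R M] :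
    Van M (fun n (A : ModuleCat.{0} R) => Subsingleton (extMod R M A n)) := by
  let P := projectiveResolution (ModuleCat.of R M)
  have key : ∀ n (A : ModuleCat.{0} R), Subsingleton (extMod R M A n) ↔
      Subsingleton (((homCx P.complex).obj A).homology n) := fun n A =>
    (P.isoExt n A : _ ≅ ((homCx P.complex).obj A).homology n).toLinearEquiv.toEquiv.subsingleton_congr
  have hP : ∀ i, Projective (P.complex.X i) := fun i => inferInstance
  simp_rw [key]
  refine ⟨homCx_homology_zero_iff P, ?_, ?_, ?_, ?_⟩
  · intro S hS n h1 h2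
    have hS := homCx_exact P.complex hP hS
    exact sub_mid _ _ (cx_ex₃ _ hS n (n+1) (by simp)) h1 fun _ => Subsingleton.elim (h := h2) _ _
  · intro A Q x g w hx hS n h1
    have hS := homCx_exact P.complex hP hS
    refine sub_mid _ _ (cx_ex₁ _ hS n (n+1) (by simp)) h1 fun z => ?_
    exact (homologyMap_apply_of_eq_smul x _ (homCx_smul _ _ _) _ z).trans
      (homCx_smul_homology_eq_zero P hx A (n+1) z)
  · intro A B i p hip n h
    refine sub_retract (HomologicalComplex.homologyMap ((homCx P.complex).map i) n)
      (HomologicalComplex.homologyMap ((homCx P.complex).map p) n) ?_ h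
    rw [← HomologicalComplex.homologyMap_comp, ← CategoryTheory.Functor.map_comp, hip,
      CategoryTheory.Functor.map_id, HomologicalComplex.homologyMap_id]
  · intro S hS n h1 h3
    have hS := homCx_exact P.complex hP hS
    exact sub_mid _ _ (cx_ex₂ _ hS n) h1 fun _ => Subsingleton.elim (h := h3) _ _

/-! ### Homological functors -/

variable (R) in
/-- A bounded `R`-linear homological functor `G_j` on `R`-modules: short exact sequences give long
exact sequences with connecting maps `δ`, `G_j = 0` for `j` outside `[bot, top]`, and every `G_j(R)`
is finitely generated. The example of interest is `A ↦ H_j(A ⊗ P)` for a bounded complex `P` of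
projectives, see `HFun.ofComplex`. -/
structure HFun where
  G : ℤ → ModuleCat.{0} R ⥤ ModuleCat.{0} R
  smul_map : ∀ j (x : R) (A : ModuleCat.{0} R) (a : (G j).obj A), (G j).map (x • 𝟙 A) a = x • a
  δ : ∀ {S : ShortComplex (ModuleCat.{0} R)}, S.ShortExact → ∀ j : ℤ,
    (G (j + 1)).obj S.X₃ ⟶ (G j).obj S.X₁
  ex₁ : ∀ {S : ShortComplex (ModuleCat.{0} R)} (hS : S.ShortExact) (j : ℤ),
    Function.Exact (δ hS j) ((G j).map S.f)
  ex₂ : ∀ {S : ShortComplex (ModuleCat.{0} R)} (_ : S.ShortExact) (j : ℤ),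
    Function.Exact ((G j).map S.f) ((G j).map S.g)
  ex₃ : ∀ {S : ShortComplex (ModuleCat.{0} R)} (hS : S.ShortExact) (j : ℤ),
    Function.Exact ((G (j + 1)).map S.g) (δ hS j)
  bot : ℤ
  top : ℤ
  lt_bot : ∀ j < bot, ∀ A, Subsingleton ((G j).obj A)
  top_lt : ∀ j > top, ∀ A, Subsingleton ((G j).obj A)
  fin_unit : ∀ j, Module.Finite R ((G j).obj (ModuleCat.of R R))

lemma shortExact_of_linearMap {A B C : Type} [AddCommGroup A] [AddCommGroup B] [AddCommGroup C]
    [Module R A] [Module R B] [Module R C] (f : A →ₗ[R] B) (g : B →ₗ[R] C)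
    (hf : Function.Injective f) (h : Function.Exact f g) (hg : Function.Surjective g) :
    ∃ w : ModuleCat.ofHom f ≫ ModuleCat.ofHom g = 0, (ShortComplex.mk _ _ w).ShortExact := by
  refine ⟨ModuleCat.hom_ext h.linearMap_comp_eq_zero, ?_⟩
  exact
    { exact := (ShortComplex.ShortExact.moduleCat_exact_iff_function_exact _).2 h
      mono_f := (ModuleCat.mono_iff_injective _).2 hf
      epi_g := (ModuleCat.epi_iff_surjective _).2 hg }

/-- The split sequence `0 → A → Aⁿ⁺¹ → Aⁿ → 0`. -/
lemma shortExact_fin (A : Type) [AddCommGroup A] [Module R A] (n : ℕ) :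
    ∃ w : ModuleCat.ofHom (LinearMap.single R (fun _ : Fin (n + 1) => A) 0) ≫
        ModuleCat.ofHom (LinearMap.funLeft R A (Fin.succ : Fin n → Fin (n + 1))) = 0,
      (ShortComplex.mk _ _ w).ShortExact := by
  refine shortExact_of_linearMap (LinearMap.single R (fun _ : Fin (n + 1) => A) 0)
    (LinearMap.funLeft R A Fin.succ)
    (Pi.single_injective (M := fun _ : Fin (n + 1) => A) 0) (fun y => ⟨fun h => ?_, ?_⟩)
    (LinearMap.funLeft_surjective_of_injective _ _ _ (Fin.succ_injective n))
  · refine ⟨y 0, funext fun i => ?_⟩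
    refine Fin.cases (by simp) (fun i => ?_) i
    simpa using (congrFun h i).symm
  · rintro ⟨a, rfl⟩
    funext i
    simp [LinearMap.funLeft]

lemma finite_of_exact [IsNoetherianRing R] {X Y Z : ModuleCat.{0} R} (f : X ⟶ Y) (g : Y ⟶ Z)
    (h : Function.Exact f g) [Module.Finite R X] [Module.Finite R Z] : Module.Finite R Y := by
  have h1 : LinearMap.ker g.hom = LinearMap.range f.hom := h.linearMap_ker_eq
  have h2 : (⊤ : Submodule R Y).FG := by
    refine Submodule.fg_of_fg_map_of_fg_inf_ker g.hom (IsNoetherian.noetherian _) ?_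
    rw [top_inf_eq, h1]
    exact Module.Finite.iff_fg.1 inferInstance
  exact ⟨h2⟩

lemma notMem_support_of_exact {X Y Z : ModuleCat.{0} R} (f : X ⟶ Y) (g : Y ⟶ Z)
    (h : Function.Exact f g) (p : PrimeSpectrum R) (hX : p ∉ Module.support R X)
    (hg : ∀ y, ∃ r ∉ p.asIdeal, r • g y = 0) : p ∉ Module.support R Y := by
  rw [Module.notMem_support_iff'] at hX ⊢
  intro y
  obtain ⟨r, hr, h1⟩ := hg y
  obtain ⟨x, hx⟩ := (h (r • y)).1 (by rw [map_smul, h1])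
  obtain ⟨s, hs, h2⟩ := hX x
  refine ⟨s * r, fun h' => (p.2.mem_or_mem h').elim hs hr, ?_⟩
  rw [mul_smul, ← hx, ← map_smul, h2, map_zero]

/-- A short exact sequence `0 → A → A → Q → 0` with first map multiplication by `x`. -/
lemma exists_quo [IsNoetherianRing R] (A : ModuleCat.{0} R) [Module.Finite R A] (x : R)
    (hx : IsSMulRegular A x) :
    ∃ (Q : ModuleCat.{0} R) (g : A ⟶ Q) (w : (x • 𝟙 A) ≫ g = 0),
      (ShortComplex.mk _ _ w).ShortExact ∧ Module.Finite R Q := by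
  have h : Function.Surjective (A.smulShortComplex x).g :=
    (ModuleCat.epi_iff_surjective _).1 inferInstance
  exact ⟨(A.smulShortComplex x).X₃, (A.smulShortComplex x).g, (A.smulShortComplex x).zero,
    hx.smulShortComplex_shortExact,
    let _ : Module.Finite R (A.smulShortComplex x).X₂ := ‹Module.Finite R A›
    Module.Finite.of_surjective (A.smulShortComplex x).g.hom h⟩

namespace HFun
variable (T : HFun R)

lemma smul_eq_zero {A : ModuleCat.{0} R} {x : R} (hx : x ∈ Module.annihilator R A) (j : ℤ)
    (a : (T.G j).obj A) : x • a = 0 := by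
  have h : x • 𝟙 A = (0 : R) • 𝟙 A := by
    ext m
    exact (Module.mem_annihilator.1 hx m).trans (zero_smul R m).symm
  rw [← T.smul_map, h, T.smul_map, zero_smul]

lemma finite_pi [IsNoetherianRing R] (j : ℤ) (n : ℕ) :
    Module.Finite R ((T.G j).obj (ModuleCat.of R (Fin n → R))) := by
  induction n with
  | zero =>
    have : Subsingleton ((T.G j).obj (ModuleCat.of R (Fin 0 → R))) := by
      refine subsingleton_of_forall_eq 0 fun a => ?_
      rw [← one_smul R a]
      exact T.smul_eq_zero (Module.mem_annihilator.2 fun m => Subsingleton.elim _ _) j a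
    infer_instance
  | succ n ih =>
    obtain ⟨w, hS⟩ := shortExact_fin (R := R) R n
    have := T.fin_unit j
    exact finite_of_exact _ _ (T.ex₂ hS j)

/-- `G_j` preserves finite generation: dimension shifting along `0 → K → Rⁿ → A → 0`, starting from
the degrees where `G_j` vanishes. -/
lemma finite [IsNoetherianRing R] (j : ℤ) (A : ModuleCat.{0} R) [Module.Finite R A] :
    Module.Finite R ((T.G j).obj A) := by
  have key : ∀ k : ℕ, ∀ j < T.bot + k, ∀ (A : ModuleCat.{0} R) [Module.Finite R A],
      Module.Finite R ((T.G j).obj A) := by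
    intro k
    induction k with
    | zero =>
      intro j hj A _
      have := T.lt_bot j (by simpa using hj) A
      infer_instance
    | succ k ih =>
      intro j hj A _
      obtain ⟨n, f, hf⟩ := Module.Finite.exists_fin' R A
      obtain ⟨w, hS⟩ := shortExact_of_linearMap (LinearMap.ker f).subtype f
        Subtype.val_injective (LinearMap.exact_subtype_ker_map f) hf
      obtain ⟨i, rfl⟩ : ∃ i, j = i + 1 := ⟨j - 1, by ring⟩
      have h1 := T.finite_pi (i + 1) n
      have h2 := ih i (by push_cast at hj; omega) (ModuleCat.of R (LinearMap.ker f))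
      exact finite_of_exact _ _ (T.ex₃ hS i)
  exact key (j - T.bot + 1).toNat j (by omega) A

/-- If `x` is regular on `A` and on all `G_j(A)`, then `G_j(A/xA) = G_j(A)/xG_j(A)`. -/
lemma quo_shortExact {A Q : ModuleCat.{0} R} {x : R} {g : A ⟶ Q} {w : (x • 𝟙 A) ≫ g = 0}
    (hS : (ShortComplex.mk _ _ w).ShortExact) (hx : ∀ j, IsSMulRegular ((T.G j).obj A) x) (j : ℤ) :
    ∃ w' : (x • 𝟙 ((T.G j).obj A)) ≫ (T.G j).map g = 0, (ShortComplex.mk _ _ w').ShortExact := by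
  have e : ∀ j, (T.G j).map (x • 𝟙 A) = x • 𝟙 _ := fun j => by
    ext a; exact T.smul_map j x A a
  have h := T.ex₂ hS j
  have h' : Function.Exact (x • 𝟙 ((T.G j).obj A) : _ ⟶ _) ((T.G j).map g) := by rw [← e]; exact h
  refine ⟨ModuleCat.hom_ext h'.linearMap_comp_eq_zero, ?_⟩
  exact
    { exact := (ShortComplex.ShortExact.moduleCat_exact_iff_function_exact _).2 h'
      mono_f := (ModuleCat.mono_iff_injective _).2 (hx j)
      epi_g := (ModuleCat.epi_iff_surjective _).2 <| by
        intro y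
        obtain ⟨i, rfl⟩ : ∃ i, j = i + 1 := ⟨j - 1, by ring⟩
        refine (T.ex₃ hS i y).1 (hx i ?_)
        refine (T.smul_map i x A _).symm.trans ((T.ex₁ hS i).apply_apply_eq_zero y |>.trans ?_)
        simp }

/-- If `G_j(A) = 0` for `j > s`, then `G_j(A/xA) = 0` for `j > s + 1`. -/
lemma quo_subsingleton {A Q : ModuleCat.{0} R} {x : R} {g : A ⟶ Q} {w : (x • 𝟙 A) ≫ g = 0}
    (hS : (ShortComplex.mk _ _ w).ShortExact) {s : ℤ}
    (h : ∀ j > s, Subsingleton ((T.G j).obj A)) :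
    ∀ j > s + 1, Subsingleton ((T.G j).obj Q) := by
  intro j hj
  obtain ⟨i, rfl⟩ : ∃ i, j = i + 1 := ⟨j - 1, by ring⟩
  have := h i (by omega)
  exact sub_mid _ _ (T.ex₃ hS i) (h (i + 1) (by omega)) fun _ => Subsingleton.elim _ _

/-- If `G_j(A) = 0` for `j > s` and `x` is also regular on all `G_j(A)`, then `G_j(A/xA) = 0` already
for `j > s`. -/
lemma quo_subsingleton' {A Q : ModuleCat.{0} R} {x : R} {g : A ⟶ Q} {w : (x • 𝟙 A) ≫ g = 0}
    (hS : (ShortComplex.mk _ _ w).ShortExact) (hx : ∀ j, IsSMulRegular ((T.G j).obj A) x) {s : ℤ}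
    (h : ∀ j > s, Subsingleton ((T.G j).obj A)) :
    ∀ j > s, Subsingleton ((T.G j).obj Q) := by
  intro j hj
  obtain ⟨w', h'⟩ := T.quo_shortExact hS hx j
  have := h j hj
  exact h'.moduleCat_surjective_g.subsingleton

/-- If `p` avoids the supports of `G_j(R/p)` for all `j ≥ c`, then it avoids those of `G_j(A)` for
all finitely generated `A` and `j ≥ c`. This is a Noetherian induction on an ideal `I` contained in
`Ann A`. By prime filtrations one may take `A = R/q`, and only `q ⊊ p` needs an argument: for
`x ∈ p \ q` the quotient `G_j(R/q)/x` embeds in `G_j(R/(q + x))`, and Nakayama applies at `p`. -/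
lemma notMem_support [IsNoetherianRing R] (p : PrimeSpectrum R) (c : ℤ)
    (hp : ∀ j ≥ c, p ∉ Module.support R ((T.G j).obj (ModuleCat.of R (R ⧸ p.asIdeal))))
    (A : ModuleCat.{0} R) [Module.Finite R A] : ∀ j ≥ c, p ∉ Module.support R ((T.G j).obj A) := by
  suffices H : ∀ I : Ideal R, ∀ (A : Type) [AddCommGroup A] [Module R A] [Module.Finite R A],
      I ≤ Module.annihilator R A →
      ∀ j ≥ c, p ∉ Module.support R ((T.G j).obj (ModuleCat.of R A)) from H ⊥ A bot_le
  intro I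
  induction I using IsNoetherian.induction with
  | hgt I IH =>
  intro A _ _ hA
  induction hA using IsNoetherianRing.induction_on_isQuotientEquivQuotientPrime R with
  | subsingleton N =>
    intro _ j _
    rw [Module.notMem_support_iff']
    refine fun a => ⟨1, p.2.one_notMem, ?_⟩
    exact T.smul_eq_zero (A := ModuleCat.of R N) (Module.mem_annihilator.2 fun m => Subsingleton.elim _ _) j a
  | quotient N q e =>
    intro hI j hj
    have hq : ∀ x : q.asIdeal, ∀ n : N, x.1 • n = 0 := by
      intro x n
      apply e.injective
      rw [map_smul, map_zero]
      obtain ⟨r, hr⟩ := Ideal.Quotient.mk_surjective (e n)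
      rw [← hr, ← Ideal.Quotient.mk_eq_mk, ← Submodule.Quotient.mk_smul,
        Submodule.Quotient.mk_eq_zero]
      exact Ideal.mul_mem_right _ _ x.2
    have hIq : I ≤ q.asIdeal := by
      intro x hx
      have h1 := Module.mem_annihilator.1 (hI hx) (e.symm 1)
      rw [← map_smul, e.symm.map_eq_zero_iff] at h1
      rwa [← map_one (Ideal.Quotient.mk q.asIdeal), ← Ideal.Quotient.mk_eq_mk,
        ← Submodule.Quotient.mk_smul, Submodule.Quotient.mk_eq_zero, smul_eq_mul, mul_one] at h1
    -- if `q ⊄ p`, an element of `q \ p` kills `G_j(R/q)`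
    by_cases hqp : q.asIdeal ≤ p.asIdeal
    swap
    · obtain ⟨t, ht, htp⟩ := Set.not_subset.1 hqp
      rw [Module.notMem_support_iff']
      exact fun a => ⟨t, htp, T.smul_eq_zero (A := ModuleCat.of R N)
        (Module.mem_annihilator.2 fun m => hq ⟨t, ht⟩ m) j a⟩
    rcases hqp.eq_or_lt with hqp | hqp
    · have hqp : q = p := PrimeSpectrum.ext hqp
      subst hqp
      have e' := ((T.G j).mapIso e.toModuleIso).toLinearEquiv
      exact e'.support_eq ▸ hp j hj
    obtain ⟨x, hxp, hxq⟩ := Set.exists_of_ssubset hqp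
    have hx : IsSMulRegular (ModuleCat.of R N) x := by
      refine isSMulRegular_iff_right_eq_zero_of_smul.2 fun n (hn : x • n = 0) => ?_
      obtain ⟨r, hr⟩ := Ideal.Quotient.mk_surjective (e n)
      have : x • e n = 0 := by rw [← map_smul, hn, map_zero]
      rw [← hr, ← Ideal.Quotient.mk_eq_mk, ← Submodule.Quotient.mk_smul,
        Submodule.Quotient.mk_eq_zero] at this
      apply e.injective
      rw [← hr, map_zero, Ideal.Quotient.eq_zero_iff_mem]
      exact (q.2.mem_or_mem this).resolve_left hxq
    obtain ⟨Q, g, w, hS, hQ⟩ := exists_quo (ModuleCat.of R N) x hx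
    have hxI : x ∉ I := fun h => hxq (hIq h)
    have hQs : ∀ j ≥ c, p ∉ Module.support R ((T.G j).obj Q) := by
      refine IH (I ⊔ Ideal.span {x}) ?_ Q ?_
      · refine lt_of_le_of_ne le_sup_left fun h => hxI ?_
        rw [h]
        exact Ideal.mem_sup_right (Ideal.mem_span_singleton_self x)
      · have hgs : Function.Surjective g := hS.moduleCat_surjective_g
        refine sup_le (hI.trans (LinearMap.annihilator_le_of_surjective g.hom hgs)) ?_
        rw [Ideal.span_singleton_le_iff_mem, Module.mem_annihilator]
        intro y
        obtain ⟨n, rfl⟩ := hgs y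
        exact (map_smul g.hom x n).symm.trans (congrArg (fun f => f.hom n) w)
    have := T.finite j (ModuleCat.of R N)
    -- `G_j(N)/x` embeds in `G_j(N/xN)`, whose support avoids `p`
    have h1 : p ∉ Module.support R ((T.G j).obj (ModuleCat.of R N) ⧸
        (Ideal.span {x} • ⊤ : Submodule R ((T.G j).obj (ModuleCat.of R N)))) := by
      rw [Module.notMem_support_iff']
      intro y
      obtain ⟨a, rfl⟩ := Submodule.Quotient.mk_surjective _ y
      obtain ⟨r, hr, h⟩ := Module.notMem_support_iff'.1 (hQs j hj) ((T.G j).map g a)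
      rw [← map_smul] at h
      obtain ⟨b, hb⟩ := (T.ex₂ hS j _).1 h
      refine ⟨r, hr, ?_⟩
      rw [← Submodule.Quotient.mk_smul, Submodule.Quotient.mk_eq_zero, ← hb]
      have := T.smul_map j x (ModuleCat.of R N) b
      refine this ▸ Submodule.smul_mem_smul (Ideal.mem_span_singleton_self x) trivial
    rw [Module.support_quotient] at h1
    refine fun h => h1 ⟨h, ?_⟩
    simpa using hxp
  | exact N₁ N₂ N₃ f g hf hg hfg h1 h3 =>
    intro hI j hj
    obtain ⟨w, hS⟩ := shortExact_of_linearMap f g hf hfg hg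
    refine notMem_support_of_exact _ _ (T.ex₂ hS j) p
      (h1 (hI.trans (f.annihilator_le_of_injective hf)) j hj) fun y => ?_
    exact Module.notMem_support_iff'.1
      (h3 (hI.trans (g.annihilator_le_of_surjective hg)) j hj) _

end HFun

/-! ### Estimates by reduction modulo regular elements -/

section
variable {M : Type} [AddCommGroup M] [Module R M] {V : ℕ → ModuleCat.{0} R → Prop}

lemma Van.of_subsingleton (hV : Van M V) (n : ℕ) (A : ModuleCat.{0} R) [Subsingleton A] : V n A := by
  induction n with
  | zero =>
    exact (hV.zero_iff A).2 ⟨fun f g => LinearMap.ext fun _ => Subsingleton.elim _ _⟩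
  | succ n ih =>
    have hex : Function.Exact ((0 : R) • 𝟙 A : A ⟶ A) (𝟙 A : A ⟶ A) := fun y =>
      ⟨fun _ => ⟨0, Subsingleton.elim _ _⟩, fun _ => Subsingleton.elim _ _⟩
    refine hV.of_quot A A 0 (𝟙 A) (by simp) (Submodule.zero_mem _) ?_ n ih
    exact
      { exact := (ShortComplex.ShortExact.moduleCat_exact_iff_function_exact _).2 hex
        mono_f := (ModuleCat.mono_iff_injective _).2 fun _ _ _ => Subsingleton.elim _ _
        epi_g := by dsimp; infer_instance }

variable [IsNoetherianRing R] [Module.Finite R M]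

/-- Some element of `Ann M` is regular on `A` and on all `G_j(A)`, if `M` has no nonzero map to any of
them. A finite product of these modules suffices as `G` is bounded. -/
lemma exists_regular (hV : Van M V) (T : HFun R) (A : ModuleCat.{0} R) [Module.Finite R A]
    (hA : V 0 A) (hG : ∀ j, V 0 ((T.G j).obj A)) :
    ∃ x ∈ Module.annihilator R M, IsSMulRegular A x ∧ ∀ j, IsSMulRegular ((T.G j).obj A) x := by
  have hf := fun j => T.finite j A
  let B := ∀ j : Set.Icc T.bot T.top, (T.G j).obj A
  have h1 : Subsingleton (M →ₗ[R] A) := (hV.zero_iff A).1 hA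
  have h2 : ∀ j, Subsingleton (M →ₗ[R] (T.G j).obj A) := fun j => (hV.zero_iff _).1 (hG j)
  have h3 : Subsingleton (M →ₗ[R] (A × B)) := by
    refine ⟨fun f g => LinearMap.ext fun m => Prod.ext ?_ (funext fun j => ?_)⟩
    · exact LinearMap.congr_fun (Subsingleton.elim (LinearMap.fst R A B ∘ₗ f)
        (LinearMap.fst R A B ∘ₗ g)) m
    · exact LinearMap.congr_fun (Subsingleton.elim
        (LinearMap.proj j ∘ₗ LinearMap.snd R A B ∘ₗ f)
        (LinearMap.proj j ∘ₗ LinearMap.snd R A B ∘ₗ g)) m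
  obtain ⟨x, hx, hr⟩ := IsSMulRegular.subsingleton_linearMap_iff.1 h3
  refine ⟨x, hx, fun a b h => ?_, fun j a b h => ?_⟩
  · exact congrArg Prod.fst (hr (Prod.ext h rfl : x • ((a, 0) : A × B) = x • ((b, 0) : A × B)))
  · by_cases hj : T.bot ≤ j ∧ j ≤ T.top
    · have e : x • ((0, Pi.single ⟨j, hj⟩ a) : A × B) = x • ((0, Pi.single ⟨j, hj⟩ b) : A × B) := by
        refine Prod.ext rfl ?_
        change x • (Pi.single ⟨j, hj⟩ a : B) = x • (Pi.single ⟨j, hj⟩ b : B)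
        rw [← Pi.single_smul, ← Pi.single_smul]
        exact congrArg _ h
      have e' : (Pi.single ⟨j, hj⟩ a : B) = Pi.single ⟨j, hj⟩ b := congrArg Prod.snd (hr e)
      exact Pi.single_injective (M := fun j : Set.Icc T.bot T.top => (T.G j).obj A) _ e'
    · have : Subsingleton ((T.G j).obj A) := by
        rcases lt_or_ge j T.bot with h | h
        · exact T.lt_bot j h A
        · exact T.top_lt j (by omega) A
      exact Subsingleton.elim _ _

/-- If `Ext^i(M, A) = 0` for `i < g`, if `s` bounds the degrees of the nonzero `G_j(A)`, and if
`G_s(A)` has a submodule `W` killed by `Ann M` and supported at `p`, then `p ∈ Supp G_{s+g}(B)` for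
some finitely generated `B`. For `x ∈ Ann M` regular on `A`, `G_{s+1}(A/xA)` is the `x`-torsion of
`G_s(A)`, so it contains a copy of `W`; iterate `g` times. -/
lemma exists_mem_support (hV : Van M V) (T : HFun R) (p : PrimeSpectrum R) (g : ℕ) :
    ∀ (A : ModuleCat.{0} R) [Module.Finite R A] (s : ℤ), (∀ i < g, V i A) →
      (∀ j > s, Subsingleton ((T.G j).obj A)) →
      ∀ W : Submodule R ((T.G s).obj A),
        (∀ x ∈ Module.annihilator R M, ∀ w ∈ W, x • w = 0) → p ∈ Module.support R W →
        ∃ (B : ModuleCat.{0} R) (_ : Module.Finite R B),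
          p ∈ Module.support R ((T.G (s + g)).obj B) := by
  induction g with
  | zero =>
    intro A hA s _ _ W _ hp
    rw [Nat.cast_zero, add_zero]
    exact ⟨A, hA, Module.support_subset_of_injective W.subtype Subtype.val_injective hp⟩
  | succ g ih =>
    intro A hA s hE hs W hW hp
    obtain ⟨x, hx, hreg⟩ := IsSMulRegular.subsingleton_linearMap_iff.1
      ((hV.zero_iff A).1 (hE 0 g.succ_pos))
    obtain ⟨Q, q, w, hS, hQ⟩ := exists_quo A x hreg
    have hδ : Function.Injective (T.δ hS s) := by
      refine (injective_iff_map_eq_zero (T.δ hS s).hom).2 fun y hy => ?_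
      obtain ⟨a, rfl⟩ := (T.ex₃ hS s y).1 hy
      have := hs (s + 1) (by omega)
      rw [Subsingleton.elim a 0, map_zero]
    obtain ⟨B, hB, h⟩ := ih Q (s + 1)
      (fun i hi => hV.last _ hS i (hE i (by omega)) (hE (i + 1) (by omega)))
      (T.quo_subsingleton hS hs) (W.comap (T.δ hS s).hom) (by
        intro y hy z hz
        apply hδ
        rw [map_zero]
        exact (map_smul (T.δ hS s).hom y z).trans (hW y hy _ hz)) (by
        have hsurj : Function.Surjective
            ((T.δ hS s).hom.restrict (p := W.comap (T.δ hS s).hom) (q := W) fun _ h => h) := by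
          rintro ⟨y, hy⟩
          obtain ⟨z, rfl⟩ := (T.ex₁ hS s y).1 ((T.smul_map s x A y).trans (hW x hx y hy))
          exact ⟨⟨z, hy⟩, rfl⟩
        exact Module.support_subset_of_surjective _ hsurj hp)
    refine ⟨B, hB, ?_⟩
    have e : s + ((g + 1 : ℕ) : ℤ) = s + 1 + g := by push_cast; ring
    rw [e]
    exact h

/-- The estimate behind `grade(M, R) ≤ grade(M, N) + qpd N`: if `r ≤ grade(M, A)`,
`m ≤ grade(M, G_j(A))` for all `j`, and `Ext^m(M, G_s(A)) ≠ 0` for the top degree `s` of `G(A)`, then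
`s + r ≤ top + m`.
Induction on `m` reduces to a nonzero map `M → G_s(A)`, whose image is fed to
`exists_mem_support`. -/
lemma add_le_top (hV : Van M V) (T : HFun R) (m : ℕ) :
    ∀ (r : ℕ) (A : ModuleCat.{0} R) [Module.Finite R A] (s : ℤ), (∀ i < r, V i A) →
      (∀ j > s, Subsingleton ((T.G j).obj A)) → (∀ i < m, ∀ j, V i ((T.G j).obj A)) →
      ¬ V m ((T.G s).obj A) → s + r ≤ T.top + m := by
  induction m with
  | zero =>
    intro r A _ s hE hs _ hm
    rw [hV.zero_iff, not_subsingleton_iff_nontrivial] at hm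
    obtain ⟨f, hf⟩ := exists_ne (0 : M →ₗ[R] (T.G s).obj A)
    have hnt : Nontrivial (LinearMap.range f) := by
      rw [Submodule.nontrivial_iff_ne_bot, ne_eq, LinearMap.range_eq_bot]
      exact hf
    obtain ⟨p, hp⟩ := Module.nonempty_support_of_nontrivial (R := R) (M := LinearMap.range f)
    obtain ⟨B, hB, h⟩ := exists_mem_support hV T p r A s hE hs (LinearMap.range f) (by
      rintro x hx _ ⟨y, rfl⟩
      rw [← map_smul, Module.mem_annihilator.1 hx, map_zero]) hp
    by_contra hlt
    have := T.top_lt (s + r) (by push_cast at hlt; omega) B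
    rw [Module.support_eq_empty] at h
    exact h
  | succ m ih =>
    intro r A _ s hE hs hG hm
    rcases r with _ | r
    · by_contra hlt
      have := T.top_lt s (by push_cast at hlt; omega) A
      exact hm (hV.of_subsingleton _ _)
    obtain ⟨x, hx, hreg, hregG⟩ := exists_regular hV T A (hE 0 r.succ_pos) (hG 0 m.succ_pos)
    obtain ⟨Q, q, w, hS, hQ⟩ := exists_quo A x hreg
    have := ih r Q s
      (fun i hi => hV.last _ hS i (hE i (by omega)) (hE (i + 1) (by omega)))
      (T.quo_subsingleton' hS hregG hs)
      (fun i hi j => by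
        obtain ⟨w', h'⟩ := T.quo_shortExact hS hregG j
        exact hV.last _ h' i (hG i (by omega) j) (hG (i + 1) (by omega) j))
      (fun h => by
        obtain ⟨w', h'⟩ := T.quo_shortExact hS hregG s
        exact hm (hV.of_quot _ _ x _ w' hx h' m h))
    push_cast
    omega

/-- Let `r = grade(M, A)`, let `s` bound the degrees of the nonzero `G_j(A)`, and let
`m ≤ grade(M, G_j(A))` for all `j`. There is `p ∈ Supp M` such that the top degree `b` with
`p ∈ Supp G_b(R/p)` satisfies `b + m ≤ s + r`. Reducing modulo regular elements of `Ann M` leads to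
`r = 0`, where `R/p` embeds in `A` for an associated prime `p` of the image of a nonzero map
`M → A`. -/
lemma exists_prime (hV : Van M V) (T : HFun R) (r : ℕ) :
    ∀ (A : ModuleCat.{0} R) [Module.Finite R A] (m : ℕ) (s : ℤ), (∀ i < r, V i A) → ¬ V r A →
      (∀ i < m, ∀ j, V i ((T.G j).obj A)) → (∀ j > s, Subsingleton ((T.G j).obj A)) →
      ∃ p ∈ Module.support R M, ∀ b,
        p ∈ Module.support R ((T.G b).obj (ModuleCat.of R (R ⧸ p.asIdeal))) →
        (∀ j > b, p ∉ Module.support R ((T.G j).obj (ModuleCat.of R (R ⧸ p.asIdeal)))) →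
        b + m ≤ s + r := by
  induction r with
  | zero =>
    intro A _ m s _ hr hG hs
    rw [hV.zero_iff, not_subsingleton_iff_nontrivial] at hr
    obtain ⟨f, hf⟩ := exists_ne (0 : M →ₗ[R] A)
    have hnt : Nontrivial (LinearMap.range f) := by
      rw [Submodule.nontrivial_iff_ne_bot, ne_eq, LinearMap.range_eq_bot]
      exact hf
    obtain ⟨P, hP⟩ := associatedPrimes.nonempty R (LinearMap.range f)
    have hann : Module.annihilator R M ≤ P := by
      refine le_trans ?_ (IsAssociatedPrime.annihilator_le hP)
      rw [Submodule.annihilator_top]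
      exact f.rangeRestrict.annihilator_le_of_surjective f.surjective_rangeRestrict
    obtain ⟨hP, ι', hι'⟩ := (isAssociatedPrime_iff_exists_injective_linearMap _ _).1 hP
    let p : PrimeSpectrum R := ⟨P, hP⟩
    let ι : (R ⧸ P) →ₗ[R] A := (LinearMap.range f).subtype ∘ₗ ι'
    have hι : Function.Injective ι := Subtype.val_injective.comp hι'
    refine ⟨p, Module.mem_support_iff_of_finite.2 hann, fun b hb hjb => ?_⟩
    obtain ⟨w, hS⟩ := shortExact_of_linearMap ι (LinearMap.range ι).mkQ hι
      (LinearMap.exact_map_mkQ_range ι) (Submodule.mkQ_surjective _)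
    have hC := T.notMem_support p (b + 1) (fun j hj => hjb j (by omega))
      (ModuleCat.of R (A ⧸ LinearMap.range ι)) (b + 1) le_rfl
    -- some element of `G_b(R/p)` has nonzero image in `G_b(A)`
    obtain ⟨y, hy⟩ : ∃ y, (T.G b).map (ModuleCat.ofHom ι) y ≠ 0 := by
      by_contra! hall
      refine notMem_support_of_exact _ _ (T.ex₁ hS b) p hC (fun y => ⟨1, p.2.one_notMem, ?_⟩) hb
      rw [one_smul]
      exact hall y
    have hbs : b ≤ s := by
      by_contra! h
      have := hs b h
      exact hy (Subsingleton.elim _ _)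
    rcases m with _ | m
    · simpa using hbs
    · have := T.finite b A
      obtain ⟨x, hx, hreg⟩ := IsSMulRegular.subsingleton_linearMap_iff.1
        ((hV.zero_iff _).1 (hG 0 m.succ_pos b))
      -- `m > 0` is impossible: `x ∈ p` kills the image of `y`, yet is regular on `G_b(A)`
      refine absurd (hreg.right_eq_zero_of_smul ?_) hy
      rw [← map_smul, T.smul_eq_zero (Module.mem_annihilator.2 fun a => ?_), map_zero]
      obtain ⟨c, rfl⟩ := Ideal.Quotient.mk_surjective a
      exact Ideal.Quotient.eq_zero_iff_mem.2 (P.mul_mem_right c (hann hx))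
  | succ r ih =>
    intro A _ m s hE hr hG hs
    rcases m with _ | m
    · obtain ⟨x, hx, hreg⟩ := IsSMulRegular.subsingleton_linearMap_iff.1
        ((hV.zero_iff A).1 (hE 0 r.succ_pos))
      obtain ⟨Q, q, w, hS, hQ⟩ := exists_quo A x hreg
      obtain ⟨p, hp, h⟩ := ih Q 0 (s + 1)
        (fun i hi => hV.last _ hS i (hE i (by omega)) (hE (i + 1) (by omega)))
        (fun h => hr (hV.of_quot _ _ x _ w hx hS r h)) (fun i hi => absurd hi i.not_lt_zero)
        (T.quo_subsingleton hS hs)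
      refine ⟨p, hp, fun b h1 h2 => ?_⟩
      have := h b h1 h2
      push_cast at this ⊢
      omega
    · obtain ⟨x, hx, hreg, hregG⟩ := exists_regular hV T A (hE 0 r.succ_pos) (hG 0 m.succ_pos)
      obtain ⟨Q, q, w, hS, hQ⟩ := exists_quo A x hreg
      obtain ⟨p, hp, h⟩ := ih Q m s
        (fun i hi => hV.last _ hS i (hE i (by omega)) (hE (i + 1) (by omega)))
        (fun h => hr (hV.of_quot _ _ x _ w hx hS r h))
        (fun i hi j => by
          obtain ⟨w', h'⟩ := T.quo_shortExact hS hregG j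
          exact hV.last _ h' i (hG i (by omega) j) (hG (i + 1) (by omega) j))
        (T.quo_subsingleton' hS hregG hs)
      refine ⟨p, hp, fun b h1 h2 => ?_⟩
      have := h b h1 h2
      push_cast at this ⊢
      omega

end

/-! ### Quasi-projective resolutions and the conclusion -/

/-- The homology `H_j(A ⊗ P)` of a bounded complex `P` of projectives with finitely generated
homology, as a homological functor of `A`. -/
def HFun.ofComplex (P : ChainComplex (ModuleCat.{0} R) ℤ) (hP : ∀ i, Projective (P.X i))
    (a b : ℤ) (ha : ∀ i < a, IsZero (P.X i)) (hb : ∀ i, b < i → IsZero (P.X i))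
    (hfin : ∀ i, Module.Finite R (P.homology i)) : HFun R where
  G j := tensCx P ⋙ HomologicalComplex.homologyFunctor _ _ j
  smul_map j x A a := homologyMap_apply_of_eq_smul x _ (tensCx_smul P x A) j a
  δ hS j := (tensCx_exact P hP hS).δ (j + 1) j rfl
  ex₁ hS j := cx_ex₁ _ (tensCx_exact P hP hS) (j + 1) j rfl
  ex₂ hS j := cx_ex₂ _ (tensCx_exact P hP hS) j
  ex₃ hS j := cx_ex₃ _ (tensCx_exact P hP hS) (j + 1) j rfl
  bot := a
  top := b
  lt_bot j hj A := subsingleton_homology_tensCx P A j (ha j hj)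
  top_lt j hj A := subsingleton_homology_tensCx P A j (hb j hj)
  fin_unit j := by
    let _ : Module.Finite R ((HomologicalComplex.homologyFunctor (ModuleCat.{0} R) _ j).obj P) :=
      hfin j
    exact Module.Finite.equiv ((HomologicalComplex.homologyFunctor _ _ j).mapIso (tensCxUnit P)).symm.toLinearEquiv

section

variable {M : Type} [AddCommGroup M] [Module R M]

lemma Van.iso {V : ℕ → ModuleCat.{0} R → Prop} (hV : Van M V) {A B : ModuleCat.{0} R} (e : A ≅ B)
    (n : ℕ) (h : V n A) : V n B :=
  hV.retract B A e.inv e.hom e.inv_hom_id n h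

lemma Van.pi {V : ℕ → ModuleCat.{0} R → Prop} (hV : Van M V) {A : Type} [AddCommGroup A]
    [Module R A] (n : ℕ) (h : V n (ModuleCat.of R A)) (k : ℕ) :
    V n (ModuleCat.of R (Fin k → A)) := by
  induction k with
  | zero => exact hV.of_subsingleton n _
  | succ k ih =>
    obtain ⟨w, hS⟩ := shortExact_fin (R := R) A k
    exact hV.mid _ hS n h ih

lemma Van.of_pi {V : ℕ → ModuleCat.{0} R → Prop} (hV : Van M V) {A : Type} [AddCommGroup A]
    [Module R A] (n k : ℕ) (i : Fin k) (h : V n (ModuleCat.of R (Fin k → A))) :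
    V n (ModuleCat.of R A) := by
  refine hV.retract _ _ (ModuleCat.ofHom (LinearMap.single R (fun _ : Fin k => A) i))
    (ModuleCat.ofHom (LinearMap.proj i)) ?_ n h
  ext a
  simp

/-- A quasi-projective resolution attaining `qpd N = n` gives a homological functor with every
`G_j(R)` a finite power of `N`. If `s` is the top degree with `G_s(R) ≠ 0`, then `G` vanishes above
`s + n`. -/
lemma exists_hFun [IsNoetherianRing R] {N : Type} [AddCommGroup N] [Module R N] [Module.Finite R N]
    (hq : qpd R N ≠ ⊤) :
    ∃ (n : ℕ) (T : HFun R) (a : ℤ → ℕ) (s : ℤ), qpd R N = n ∧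
      (∀ j, Nonempty ((T.G j).obj (ModuleCat.of R R) ≅ ModuleCat.of R (Fin (a j) → N))) ∧
      T.top ≤ s + n ∧ 0 < a s ∧ ∀ j > s, Subsingleton ((T.G j).obj (ModuleCat.of R R)) := by
  have hne : {c : ℕ∞ | ∃ n : ℕ, c = n ∧ ∃ P : ChainComplex (ModuleCat.{0} R) ℤ,
      IsQuasiProjRes R P N ∧
      ∃ h : ℤ, ¬ IsZero (P.homology h) ∧ ∀ i, h + n < i → IsZero (P.X i)}.Nonempty := by
    rw [Set.nonempty_iff_ne_empty]
    intro h
    exact hq (by rw [qpd, h, sInf_empty])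
  obtain ⟨n, hn, P, ⟨hP, ⟨lo, hlo⟩, a, -, ha⟩, h, hh, hhn⟩ := csInf_mem hne
  have hfin : ∀ i, Module.Finite R (P.homology i) := fun i =>
    Module.Finite.equiv (ha i).some.symm.toLinearEquiv
  let T := HFun.ofComplex P hP lo (h + n) hlo hhn hfin
  have e : ∀ j, (T.G j).obj (ModuleCat.of R R) ≅ P.homology j := fun j =>
    (HomologicalComplex.homologyFunctor _ _ j).mapIso (tensCxUnit P)
  have hh' : Nontrivial ((T.G h).obj (ModuleCat.of R R)) := by
    rw [← not_subsingleton_iff_nontrivial, ← ModuleCat.isZero_iff_subsingleton]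
    exact fun H => hh (H.of_iso (e h).symm)
  obtain ⟨s, hs, hmax⟩ := Int.exists_greatest_of_bdd
    (P := fun j => Nontrivial ((T.G j).obj (ModuleCat.of R R)))
    ⟨T.top, fun j hj => by
      by_contra! hlt
      exact not_subsingleton_iff_nontrivial.2 hj (T.top_lt j hlt _)⟩ ⟨h, hh'⟩
  refine ⟨n, T, a, s, hn, fun j => ⟨e j ≪≫ (ha j).some⟩, ?_, ?_, fun j hj => ?_⟩
  · have := hmax h hh'
    change h + n ≤ s + n
    omega
  · rw [Nat.pos_iff_ne_zero]
    intro h0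
    have e1 := (e s ≪≫ (ha s).some).toLinearEquiv
    rw [h0] at e1
    exact not_subsingleton_iff_nontrivial.2 hs e1.toEquiv.subsingleton
  · by_contra hns
    have := hmax j (not_subsingleton_iff_nontrivial.1 hns)
    omega

lemma subsingleton_of_lt_extGrade {N : Type} [AddCommGroup N] [Module R N] {i : ℕ}
    (h : (i : ℕ∞) < extGrade R M N) : Subsingleton (extMod R M N i) := by
  by_contra hi
  exact not_le_of_gt h (csInf_le (OrderBot.bddBelow _) ⟨i, rfl, not_subsingleton_iff_nontrivial.1 hi⟩)

lemma exists_extGrade_eq {N : Type} [AddCommGroup N] [Module R N] (h : extGrade R M N ≠ ⊤) :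
    ∃ m : ℕ, extGrade R M N = m ∧ ¬ Subsingleton (extMod R M N m) := by
  have hne : {c : ℕ∞ | ∃ i : ℕ, c = i ∧ Nontrivial (extMod R M N i)}.Nonempty := by
    rw [Set.nonempty_iff_ne_empty]
    intro h'
    exact h (by rw [extGrade, h', sInf_empty])
  obtain ⟨m, hm, hnt⟩ := csInf_mem hne
  exact ⟨m, hm, not_subsingleton_iff_nontrivial.2 hnt⟩

variable [IsNoetherianRing R] [Module.Finite R M]

/-- `grade(M, R) ≤ grade(M, N) + qpd N`. -/
lemma extGrade_self_le {N : Type} [AddCommGroup N] [Module R N] [Module.Finite R N]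
    (hq : qpd R N ≠ ⊤) : extGrade R M R ≤ extGrade R M N + qpd R N := by
  rcases eq_or_ne (extGrade R M N) ⊤ with h | h
  · simp [h]
  obtain ⟨m, hm, hnt⟩ := exists_extGrade_eq h
  obtain ⟨n, T, a, s, hn, e, htop, has, hs⟩ := exists_hFun hq
  have hV := extVan (R := R) M
  refine ENat.forall_natCast_le_iff_le.1 fun r hr => ?_
  have := add_le_top hV T m r (ModuleCat.of R R) s
    (fun i hi => subsingleton_of_lt_extGrade (lt_of_lt_of_le (by exact_mod_cast hi) hr)) hs
    (fun i hi j => hV.iso (e j).some.symm i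
      (hV.pi i (subsingleton_of_lt_extGrade (by rw [hm]; exact_mod_cast hi)) _))
    (fun h' => hnt (hV.of_pi m _ ⟨0, has⟩ (hV.iso (e s).some m h')))
  rw [hm, hn]
  have : r ≤ m + n := by omega
  exact_mod_cast this

/-- `grade(L, R) + grade(M, L) ≤ grade(M, R)` when `qpd L < ∞` and `Supp M ⊆ Supp L`. -/
lemma add_extGrade_le {L : Type} [AddCommGroup L] [Module R L] [Module.Finite R L]
    (hq : qpd R L ≠ ⊤) (hsupp : Module.support R M ⊆ Module.support R L) :
    extGrade R L R + extGrade R M L ≤ extGrade R M R := by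
  rcases eq_or_ne (extGrade R M R) ⊤ with h | h
  · simp [h]
  obtain ⟨r, hr, hnt⟩ := exists_extGrade_eq h
  obtain ⟨n, T, a, s, hn, e, htop, has, hs⟩ := exists_hFun hq
  have hV := extVan (R := R) M
  have key : ∀ g m : ℕ, (g : ℕ∞) ≤ extGrade R L R → (m : ℕ∞) ≤ extGrade R M L → g + m ≤ r := by
    intro g m hg hm
    obtain ⟨p, hp, hb⟩ := exists_prime hV T r (ModuleCat.of R R) m s
      (fun i hi => subsingleton_of_lt_extGrade (by rw [hr]; exact_mod_cast hi)) hnt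
      (fun i hi j => hV.iso (e j).some.symm i
        (hV.pi i (subsingleton_of_lt_extGrade (lt_of_lt_of_le (by exact_mod_cast hi) hm)) _)) hs
    let f : L →ₗ[R] (⊤ : Submodule R ((T.G s).obj (ModuleCat.of R R))) :=
      (Submodule.topEquiv.symm.toLinearMap ∘ₗ (e s).some.symm.toLinearEquiv.toLinearMap) ∘ₗ
        LinearMap.single R (fun _ : Fin (a s) => L) ⟨0, has⟩
    have hf : Function.Injective f :=
      (Submodule.topEquiv.symm.injective.comp (e s).some.symm.toLinearEquiv.injective).comp
        (Pi.single_injective (M := fun _ : Fin (a s) => L) _)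
    obtain ⟨B, hB, hpB⟩ := exists_mem_support (extVan (R := R) L) T p g (ModuleCat.of R R) s
      (fun i hi => subsingleton_of_lt_extGrade (lt_of_lt_of_le (by exact_mod_cast hi) hg)) hs ⊤
      (fun x hx w _ => by
        apply (e s).some.toLinearEquiv.injective
        rw [map_smul, map_zero]
        exact funext fun i => Module.mem_annihilator.1 hx _)
      (Module.support_subset_of_injective f hf (hsupp hp))
    -- `p` lies in `Supp G_{s+g}(B)`, hence in `Supp G_j(R/p)` for some `j ≥ s + g`
    obtain ⟨j, hj, hpj⟩ : ∃ j ≥ s + g,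
        p ∈ Module.support R ((T.G j).obj (ModuleCat.of R (R ⧸ p.asIdeal))) := by
      by_contra! hall
      exact T.notMem_support p (s + g) hall B (s + g) le_rfl hpB
    obtain ⟨b, hpb, hmax⟩ := Int.exists_greatest_of_bdd
      (P := fun j => p ∈ Module.support R ((T.G j).obj (ModuleCat.of R (R ⧸ p.asIdeal))))
      ⟨T.top, fun j hj => by
        by_contra! hlt
        have := T.top_lt j hlt (ModuleCat.of R (R ⧸ p.asIdeal))
        rw [Module.support_eq_empty] at hj
        exact hj⟩ ⟨j, hpj⟩
    have h1 := hb b hpb fun j hj hpj => by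
      have := hmax j hpj
      omega
    have h2 := hmax j hpj
    omega
  rw [hr]
  have h1 : extGrade R L R ≠ ⊤ := fun h' => by
    have := key (r + 1) 0 (by rw [h']; exact le_top) (by simp)
    omega
  have h2 : extGrade R M L ≠ ⊤ := fun h' => by
    have := key 0 (r + 1) (by simp) (by rw [h']; exact le_top)
    omega
  obtain ⟨g, hg, -⟩ := exists_extGrade_eq h1
  obtain ⟨m, hm, -⟩ := exists_extGrade_eq h2
  rw [hg, hm]
  exact_mod_cast key g m hg.ge hm.ge

end

end QP

end

/-- If `qpd_R N < ∞`, `qpd_R L < ∞` and `Supp M ⊆ Supp L`, then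
`grade L + grade(M,L) ≤ grade(M,N) + qpd_R N` over a Noetherian ring. -/
theorem stmt19 (R : Type) [CommRing R] [IsNoetherianRing R]
    (M N L : Type) [AddCommGroup M] [Module R M] [AddCommGroup N] [Module R N]
    [AddCommGroup L] [Module R L]
    [Module.Finite R M] [Module.Finite R N] [Module.Finite R L]
    (hM : Nontrivial M) (hN : Nontrivial N) (hL : Nontrivial L)
    (hqN : qpd R N ≠ ⊤) (hqL : qpd R L ≠ ⊤)
    (hsupp : Module.support R M ⊆ Module.support R L) :
    extGrade R L R + extGrade R M L ≤ extGrade R M N + qpd R N := by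
  calc extGrade R L R + extGrade R M L
      ≤ extGrade R M R := QP.add_extGrade_le hqL hsupp
    _ ≤ extGrade R M N + qpd R N := QP.extGrade_self_le hqN
end
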